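/- arXiv:1907.07436 — 2 statements merged into one kernel-verified Lean document; each statement's English description precedes it below -/
import Mathlib

section
/- Let Ω ⊆ ℝⁿ be open, 𝒯 ⊆ Ω a closed target, A ⊆ ℝᵐ nonempty compact, f : Ω × A → ℝⁿ continuous, uniformly Lipschitz in x, with f(x,A) convex and −f(x,A) ⊆ f(x,A), and H(x,p) = max_{a∈A}(−f(x,a)·p) with H_p existing and continuous where H > 0. Let ℋ = {x : H(x,∇U(x)) = 0} and assume U ∈ C(cl(Ω∖𝒯)) ∩ C¹(Ω∖(𝒯∩ℋ)) is nonnegative, is a C¹-supersolution of the Aronsson equation on Ω∖(𝒯∩ℋ), and satisfies U = 0 on 𝒯, U = M on ∂Ω, and 0 < U(x) < M for x ∈ Ω∖𝒯 for some M > 0. Then for every x₀ ∈ Ω∖(𝒯∪ℋ) there exist a time t̄ ≤ U(x₀)/H(x₀,∇U(x₀)) and a C¹ curve x : [0,t̄] → cl Ω with x(0) = x₀, ẋ(t) = −H_p(x(t),∇U(x(t))) and x(t) ∈ Ω∖𝒯 for t ∈ [0,t̄), such that: (i) t ↦ H(x(t),∇U(x(t))) is nondecreasing on [0,t̄); (ii)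 t ↦ U(x(t)) is strictly decreasing on [0,t̄]; (iii) x(t̄) ∈ 𝒯, and consequently the minimum time function satisfies T(x₀) ≤ U(x₀)/H(x₀,∇U(x₀)). -/
open Set MeasureTheory
open scoped RealInnerProductSpace

/-- An admissible trajectory of the control system `ẋ = f(x,a)`, `a(t) ∈ A`,
starting at `x₀`: a continuous curve satisfying the integral equation for some
measurable control. -/
def IsAdmTraj {n m : ℕ} (A : Set (EuclideanSpace ℝ (Fin m)))
    (f : EuclideanSpace ℝ (Fin n) → EuclideanSpace ℝ (Fin m) → EuclideanSpace ℝ (Fin n))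
    (x₀ : EuclideanSpace ℝ (Fin n)) (x : ℝ → EuclideanSpace ℝ (Fin n)) : Prop :=
  x 0 = x₀ ∧ ContinuousOn x (Ici (0:ℝ)) ∧
    ∃ a : ℝ → EuclideanSpace ℝ (Fin m), Measurable a ∧ (∀ t, a t ∈ A) ∧
      ∀ t : ℝ, 0 ≤ t → x t = x₀ + ∫ s in (0:ℝ)..t, f (x s) (a s)

/-- The set of times at which the target `T` can be reached from `x₀` by an
admissible trajectory staying in `Ω`; the minimum time function is its infimum. -/
def reachTimes {n m : ℕ} (Ω T : Set (EuclideanSpace ℝ (Fin n)))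
    (A : Set (EuclideanSpace ℝ (Fin m)))
    (f : EuclideanSpace ℝ (Fin n) → EuclideanSpace ℝ (Fin m) → EuclideanSpace ℝ (Fin n))
    (x₀ : EuclideanSpace ℝ (Fin n)) : Set ℝ :=
  {t | 0 ≤ t ∧ ∃ x : ℝ → EuclideanSpace ℝ (Fin n), IsAdmTraj A f x₀ x ∧
    (∀ s ∈ Icc (0:ℝ) t, x s ∈ Ω) ∧ x t ∈ T}


lemma euler_scheme {E : Type*} [NormedAddCommGroup E] [InnerProductSpace ℝ E]
    [FiniteDimensional ℝ E] (z : E) (r C : ℝ) (hr : 0 < r) (V : E → ℝ) (F : E → E)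
    (hV : ContinuousOn V (Metric.closedBall z (2 * r)))
    (hVC : ∀ x ∈ Metric.closedBall z (2 * r), |V x| ≤ C)
    (hFC : ∀ x ∈ Metric.closedBall z (2 * r), ‖F x‖ ≤ C)
    (hvis : ∀ x ∈ Metric.ball z (2 * r), ∀ y : E, ∀ l : ℝ, 0 < l →
      IsLocalMax (fun u => V u - ‖u - y‖ ^ 2 / (2 * l)) x → 0 ≤ ⟪F x, x - y⟫)
    (l : ℝ) (hl : 0 < l) (hlr : 4 * l * C < r ^ 2) :
    ∃ (y s : ℕ → E) (W : ℕ → ℝ), y 0 = z ∧ (∀ k, y (k + 1) = y k + (l ^ 2) • F (s k)) ∧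
      ∀ k : ℕ, k * l ^ 2 * C ≤ r → 
        (y k ∈ Metric.closedBall z r ∧ s k ∈ Metric.closedBall z (2 * r) ∧
        ‖s k - y k‖ ^ 2 ≤ 4 * l * C ∧ V (y k) ≤ W k ∧ W k ≤ V (s k) ∧ 
        ((k + 1 : ℕ) * l ^ 2 * C ≤ r → W k - l ^ 3 * C ^ 2 / 2 ≤ W (k + 1))) := by
  have hne : z ∈ Metric.closedBall z (2 * r) := Metric.mem_closedBall_self (by linarith)
  have hC : 0 ≤ C := (norm_nonneg _).trans (hFC z hne)
  have hmax : ∀ y : E, ∃ s ∈ Metric.closedBall z (2 * r), ∀ u ∈ Metric.closedBall z (2 * r),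
      V u - ‖u - y‖ ^ 2 / (2 * l) ≤ V s - ‖s - y‖ ^ 2 / (2 * l) := by
    intro y
    have hc : ContinuousOn (fun u => V u - ‖u - y‖ ^ 2 / (2 * l)) (Metric.closedBall z (2 * r)) := by
      apply hV.sub
      fun_prop
    obtain ⟨s, hs, hm⟩ := (isCompact_closedBall z (2 * r)).exists_isMaxOn ⟨z, hne⟩ hc
    exact ⟨s, hs, fun u hu => hm hu⟩
  choose S hS1 hS2 using hmax
  let y : ℕ → E := fun k => Nat.rec z (fun _ v => v + (l ^ 2) • F (S v)) k
  have hy0 : y 0 = z := rfl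
  have hys : ∀ k, y (k + 1) = y k + (l ^ 2) • F (S (y k)) := fun k => rfl
  have hd : ∀ k : ℕ, ‖y k - z‖ ≤ k * l ^ 2 * C := by
    intro k
    induction k with
    | zero => simp [hy0]
    | succ k ih =>
      have : y (k + 1) - z = (y k - z) + (l ^ 2) • F (S (y k)) := by rw [hys]; abel
      rw [this]
      refine (norm_add_le _ _).trans ?_
      rw [norm_smul, Real.norm_of_nonneg (by positivity)]
      have := mul_le_mul_of_nonneg_left (hFC _ (hS1 (y k))) (by positivity : 0 ≤ l ^ 2)
      push_cast
      linarith
  refine ⟨y, fun k => S (y k), fun k => V (S (y k)) - ‖S (y k) - y k‖ ^ 2 / (2 * l), hy0, hys, ?_⟩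
  intro k hk
  have hyr : ‖y k - z‖ ≤ r := (hd k).trans hk
  have hyb : y k ∈ Metric.closedBall z r := by simpa [dist_eq_norm] using hyr
  have hyb2 : y k ∈ Metric.closedBall z (2 * r) := Metric.closedBall_subset_closedBall (by linarith) hyb
  have h1 := hS2 (y k) (y k) hyb2
  simp only [sub_self, norm_zero] at h1
  have h1' : V (y k) ≤ V (S (y k)) - ‖S (y k) - y k‖ ^ 2 / (2 * l) := by simpa using h1
  have hq : ‖S (y k) - y k‖ ^ 2 ≤ 4 * l * C := by
    have a1 := abs_le.1 (hVC _ hyb2)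
    have a2 := abs_le.1 (hVC _ (hS1 (y k)))
    have : ‖S (y k) - y k‖ ^ 2 / (2 * l) ≤ 2 * C := by linarith
    rw [div_le_iff₀ (by positivity)] at this
    linarith
  have hsr : ‖S (y k) - y k‖ < r := by
    apply lt_of_pow_lt_pow_left₀ 2 hr.le
    linarith
  have hsb : S (y k) ∈ Metric.ball z (2 * r) := by
    rw [Metric.mem_ball, dist_eq_norm]
    have : S (y k) - z = (S (y k) - y k) + (y k - z) := by abel
    rw [this]
    refine (norm_add_le _ _).trans_lt ?_
    linarith
  have hin : 0 ≤ ⟪F (S (y k)), S (y k) - y k⟫ := by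
    apply hvis _ hsb _ l hl
    filter_upwards [Metric.isOpen_ball.mem_nhds hsb] with u hu
    exact hS2 (y k) u (Metric.ball_subset_closedBall hu)
  refine ⟨hyb, hS1 _, hq, h1', ?_, ?_⟩
  · have : 0 ≤ ‖S (y k) - y k‖ ^ 2 / (2 * l) := by positivity
    linarith
  · intro _
    have h2 := hS2 (y (k + 1)) (S (y k)) (hS1 _)
    have h3 : ‖S (y k) - y (k + 1)‖ ^ 2 ≤ ‖S (y k) - y k‖ ^ 2 + l ^ 4 * C ^ 2 := by
      have : S (y k) - y (k + 1) = (S (y k) - y k) - (l ^ 2) • F (S (y k)) := by rw [hys]; abel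
      rw [this, norm_sub_sq_real, inner_smul_right, real_inner_comm, norm_smul,
        Real.norm_of_nonneg (by positivity)]
      have h4 : ‖F (S (y k))‖ ^ 2 ≤ C ^ 2 := pow_le_pow_left₀ (norm_nonneg _) (hFC _ (hS1 _)) 2
      have h5 : (l ^ 2 * ‖F (S (y k))‖) ^ 2 ≤ l ^ 4 * C ^ 2 := by
        have := mul_le_mul_of_nonneg_left h4 (by positivity : 0 ≤ l ^ 4)
        calc _ = l ^ 4 * ‖F (S (y k))‖ ^ 2 := by ring
          _ ≤ _ := this
      have h6 : 0 ≤ l ^ 2 * ⟪F (S (y k)), S (y k) - y k⟫ := by positivity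
      linarith
    have h4 : ‖S (y k) - y (k + 1)‖ ^ 2 / (2 * l) ≤ ‖S (y k) - y k‖ ^ 2 / (2 * l) + l ^ 3 * C ^ 2 / 2 := by
      have : ‖S (y k) - y k‖ ^ 2 / (2 * l) + l ^ 3 * C ^ 2 / 2
          = (‖S (y k) - y k‖ ^ 2 + l ^ 4 * C ^ 2) / (2 * l) := by
        field_simp
      rw [this]
      gcongr
    show V (S (y k)) - ‖S (y k) - y k‖ ^ 2 / (2 * l) - l ^ 3 * C ^ 2 / 2 ≤ 
      V (S (y (k+1))) - ‖S (y (k+1)) - y (k+1)‖ ^ 2 / (2 * l)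
    linarith

lemma euler_incr {E : Type*} [NormedAddCommGroup E] [InnerProductSpace ℝ E]
    (y v : ℕ → E) (h : ℝ) (hh : 0 ≤ h) (hy : ∀ k, y (k + 1) = y k + h • v k) (w : E) (ε : ℝ)
    (k1 k2 : ℕ) (hk : k1 ≤ k2) (hv : ∀ k, k1 ≤ k → k < k2 → ‖v k - w‖ ≤ ε) :
    ‖y k2 - y k1 - (((k2 : ℝ) - k1) * h) • w‖ ≤ ((k2 : ℝ) - k1) * h * ε := by
  induction k2, hk using Nat.le_induction with
  | base => simp
  | succ k hk ih =>
    have ih := ih (fun j h1 h2 => hv j h1 (by omega))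
    have h1 : y (k + 1) - y k1 - ((((k + 1 : ℕ) : ℝ) - k1) * h) • w
        = (y k - y k1 - (((k : ℝ) - k1) * h) • w) + h • (v k - w) := by
      rw [hy, smul_sub]
      have : ((((k + 1 : ℕ) : ℝ) - k1) * h) • w = (((k : ℝ) - k1) * h) • w + h • w := by
        rw [← add_smul]; congr 1; push_cast; ring
      rw [this]; abel
    rw [h1]
    refine (norm_add_le _ _).trans ?_
    rw [norm_smul, Real.norm_of_nonneg hh]
    have := mul_le_mul_of_nonneg_left (hv k hk (by omega)) hh
    push_cast
    linarith

lemma local_exist {E : Type*} [NormedAddCommGroup E] [InnerProductSpace ℝ E]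
    [FiniteDimensional ℝ E] (O : Set E) (hO : IsOpen O) (V : E → ℝ) (F : E → E)
    (hV : ContinuousOn V O) (hF : ContinuousOn F O)
    (hvis : ∀ x ∈ O, ∀ y : E, ∀ l : ℝ, 0 < l →
      IsLocalMax (fun u => V u - ‖u - y‖ ^ 2 / (2 * l)) x → 0 ≤ ⟪F x, x - y⟫)
    (z : E) (hz : z ∈ O) :
    ∃ δ : ℝ, 0 < δ ∧ ∃ x : ℝ → E, x 0 = z ∧ (∀ t ∈ Icc 0 δ, x t ∈ O) ∧
      (∀ t ∈ Icc 0 δ, HasDerivWithinAt x (F (x t)) (Icc 0 δ) t) ∧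
      MonotoneOn (fun t => V (x t)) (Icc 0 δ) := by
  obtain ⟨r, hr, hrO⟩ : ∃ r > 0, Metric.closedBall z (2 * r) ⊆ O := by
    obtain ⟨e, he, heO⟩ := Metric.nhds_basis_closedBall.mem_iff.1 (hO.mem_nhds hz)
    exact ⟨e / 2, by positivity, by rwa [mul_div_cancel₀ _ (two_ne_zero)]⟩
  have hcomp := isCompact_closedBall z (2 * r)
  obtain ⟨C1, hC1⟩ := hcomp.exists_bound_of_continuousOn (hV.mono hrO)
  obtain ⟨C2, hC2⟩ := hcomp.exists_bound_of_continuousOn (hF.mono hrO)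
  obtain ⟨C, hC, hVC, hFC⟩ : ∃ C : ℝ, 0 < C ∧ (∀ x ∈ Metric.closedBall z (2 * r), |V x| ≤ C) ∧
      (∀ x ∈ Metric.closedBall z (2 * r), ‖F x‖ ≤ C) := by
    refine ⟨max 1 (max C1 C2), by positivity, fun x hx => ?_, fun x hx => ?_⟩
    · exact (hC1 x hx).trans ((le_max_left _ _).trans (le_max_right _ _))
    · exact (hC2 x hx).trans ((le_max_right _ _).trans (le_max_right _ _))
  obtain ⟨l, hl0, hlr, hlim⟩ : ∃ l : ℕ → ℝ, (∀ N, 0 < l N) ∧ (∀ N, 4 * l N * C < r ^ 2) ∧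
      Filter.Tendsto l Filter.atTop (nhds 0) := by
    refine ⟨fun N => (r ^ 2 / (8 * C)) * (1 / ((N : ℝ) + 1)), fun N => by positivity, fun N => ?_, ?_⟩
    · have h1 : 1 / ((N : ℝ) + 1) ≤ 1 := by
        rw [div_le_one (by positivity)]; linarith [(Nat.cast_nonneg N : (0:ℝ) ≤ N)]
      have h2 : (r ^ 2 / (8 * C)) * (1 / ((N : ℝ) + 1)) ≤ r ^ 2 / (8 * C) :=
        mul_le_of_le_one_right (by positivity) h1
      have h3 : 4 * (r ^ 2 / (8 * C)) * C = r ^ 2 / 2 := by field_simp; norm_num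
      have h4 : 4 * ((r ^ 2 / (8 * C)) * (1 / ((N : ℝ) + 1))) * C ≤ 4 * (r ^ 2 / (8 * C)) * C := by
        gcongr
      have : 0 < r ^ 2 := by positivity
      linarith
    · simpa using (tendsto_one_div_add_atTop_nhds_zero_nat (𝕜 := ℝ)).const_mul (r ^ 2 / (8 * C))
  have hsch := fun N => euler_scheme z r C hr V F (hV.mono hrO) hVC hFC
    (fun x hx => hvis x (hrO (Metric.ball_subset_closedBall hx))) (l N) (hl0 N) (hlr N)
  choose y s W hy0 hys hP using hsch
  let δ := r / C
  have hδ : 0 < δ := by positivity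
  let K : ℕ → ℝ → ℕ := fun N t => ⌊t / l N ^ 2⌋₊
  have hK1 : ∀ N t, 0 ≤ t → (K N t : ℝ) * l N ^ 2 ≤ t := by
    intro N t ht
    have := hl0 N
    have h1 := Nat.floor_le (show 0 ≤ t / l N ^ 2 by positivity)
    rwa [le_div_iff₀ (by positivity)] at h1
  have hK2 : ∀ N t, t < ((K N t : ℝ) + 1) * l N ^ 2 := by
    intro N t
    have := hl0 N
    have h1 := Nat.lt_floor_add_one (t / l N ^ 2)
    rwa [div_lt_iff₀ (by positivity)] at h1
  have hval : ∀ N t, t ∈ Icc 0 δ → ∀ k ≤ K N t, (k : ℝ) * l N ^ 2 * C ≤ r := by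
    intro N t ht k hk
    have := hl0 N
    have h1 : (k : ℝ) * l N ^ 2 ≤ (K N t : ℝ) * l N ^ 2 := by gcongr
    have h2 := (h1.trans (hK1 N t ht.1)).trans ht.2
    exact (le_div_iff₀ hC).1 h2
  have hKm : ∀ N t1 t2, t1 ≤ t2 → K N t1 ≤ K N t2 := by
    intro N t1 t2 h
    have := hl0 N
    apply Nat.floor_mono; gcongr
  let 𝓤 : Ultrafilter ℕ := Filter.hyperfilter ℕ
  have hU : (𝓤 : Filter ℕ) ≤ Filter.atTop := Nat.hyperfilter_le_atTop
  have hlimU : Filter.Tendsto l 𝓤 (nhds 0) := hlim.mono_left hU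
  have hlim2 : Filter.Tendsto (fun N => l N ^ 2) 𝓤 (nhds 0) := by simpa using hlimU.pow 2
  have hx : ∀ t : ℝ, ∃ x : E, t ∈ Icc 0 δ → x ∈ Metric.closedBall z r ∧
      Filter.Tendsto (fun N => y N (K N t)) 𝓤 (nhds x) := by
    intro t
    by_cases ht : t ∈ Icc 0 δ
    · obtain ⟨x, hx, hxl⟩ := (isCompact_closedBall z r).ultrafilter_le_nhds
        (𝓤.map (fun N => y N (K N t))) (by
          rw [Ultrafilter.coe_map, Filter.le_principal_iff, Filter.mem_map]
          exact Filter.Eventually.of_forall fun N => (hP N _ (hval N t ht _ le_rfl)).1)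
      exact ⟨x, fun _ => ⟨hx, hxl⟩⟩
    · exact ⟨z, fun h => absurd h ht⟩
  choose x hx using hx
  have hxO : ∀ t ∈ Icc 0 δ, x t ∈ Metric.closedBall z (2 * r) := fun t ht =>
    Metric.closedBall_subset_closedBall (by linarith) (hx t ht).1
  have hsq : Filter.Tendsto (fun N => Real.sqrt (4 * l N * C)) 𝓤 (nhds 0) := by
    have := ((hlimU.const_mul 4).mul_const C).sqrt
    simpa using this
  have hsy : ∀ (N k : ℕ), (k : ℝ) * l N ^ 2 * C ≤ r → ‖s N k - y N k‖ ≤ Real.sqrt (4 * l N * C) :=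
    fun N k hk => Real.le_sqrt_of_sq_le (hP N k hk).2.2.1
  have hsx : ∀ t ∈ Icc 0 δ, Filter.Tendsto (fun N => s N (K N t)) 𝓤 (nhds (x t)) := by
    intro t ht
    have h1 : Filter.Tendsto (fun N => s N (K N t) - y N (K N t)) 𝓤 (nhds 0) :=
      squeeze_zero_norm (fun N => hsy N _ (hval N t ht _ le_rfl)) hsq
    simpa using h1.add (hx t ht).2
  have hWx : ∀ t ∈ Icc 0 δ, Filter.Tendsto (fun N => W N (K N t)) 𝓤 (nhds (V (x t))) := by
    intro t ht
    have hVx : ContinuousAt V (x t) := hV.continuousAt (hO.mem_nhds (hrO (hxO t ht)))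
    exact tendsto_of_tendsto_of_tendsto_of_le_of_le (hVx.tendsto.comp (hx t ht).2)
      (hVx.tendsto.comp (hsx t ht)) (fun N => (hP N _ (hval N t ht _ le_rfl)).2.2.2.1)
      (fun N => (hP N _ (hval N t ht _ le_rfl)).2.2.2.2.1)
  have hKd : ∀ t ∈ Icc 0 δ, Filter.Tendsto (fun N => (K N t : ℝ) * l N ^ 2) 𝓤 (nhds t) := by
    intro t ht
    have h1 : Filter.Tendsto (fun N => t - l N ^ 2) 𝓤 (nhds t) := by
      simpa using hlim2.const_sub t
    refine tendsto_of_tendsto_of_tendsto_of_le_of_le h1 tendsto_const_nhds (fun N => ?_)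
      (fun N => hK1 N t ht.1)
    have := hK2 N t
    show t - l N ^ 2 ≤ _
    linarith
  -- main increment estimate
  have hA : ∀ t1 ∈ Icc 0 δ, ∀ t2 ∈ Icc 0 δ, t1 ≤ t2 → ∀ (w : E) (ε η : ℝ), 0 < η →
      (∀ u ∈ Metric.closedBall z (2 * r), ‖u - x t1‖ ≤ C * (t2 - t1) + η → ‖F u - w‖ ≤ ε) →
      ‖x t2 - x t1 - (t2 - t1) • w‖ ≤ (t2 - t1) * ε := by
    intro t1 h1 t2 h2 h12 w ε η hη hu
    have e1 : ∀ᶠ N in (𝓤 : Filter ℕ), Real.sqrt (4 * l N * C) < η / 3 :=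
      hsq.eventually_lt_const (by positivity)
    have e2 : ∀ᶠ N in (𝓤 : Filter ℕ), l N ^ 2 * C < η / 3 := by
      have : Filter.Tendsto (fun N => l N ^ 2 * C) 𝓤 (nhds 0) := by simpa using hlim2.mul_const C
      exact this.eventually_lt_const (by positivity)
    have e3 : ∀ᶠ N in (𝓤 : Filter ℕ), ‖y N (K N t1) - x t1‖ < η / 3 := by
      have := (tendsto_iff_norm_sub_tendsto_zero.1 (hx t1 h1).2)
      exact this.eventually_lt_const (by positivity)
    have e4 : ∀ᶠ N in (𝓤 : Filter ℕ), ‖y N (K N t2) - y N (K N t1) -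
        (((K N t2 : ℝ) - K N t1) * l N ^ 2) • w‖ ≤ ((K N t2 : ℝ) - K N t1) * l N ^ 2 * ε := by
      filter_upwards [e1, e2, e3] with N e1 e2 e3
      apply euler_incr (y N) (fun k => F (s N k)) (l N ^ 2) (by positivity) (hys N) w ε _ _
        (hKm N _ _ h12)
      intro k hk1 hk2
      have hk := hval N t2 h2 k hk2.le
      apply hu _ (hP N k hk).2.1
      have h3 := euler_incr (y N) (fun k => F (s N k)) (l N ^ 2) (by positivity) (hys N) 0 C _ k hk1
        (by
          intro j _ hj
          rw [sub_zero]
          exact hFC _ (hP N j (hval N t2 h2 j (by omega))).2.1)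
      rw [smul_zero, sub_zero] at h3
      have h4 : ((k : ℝ) - K N t1) * l N ^ 2 * C ≤ (t2 - t1) * C + l N ^ 2 * C := by
        have h5 : (k : ℝ) * l N ^ 2 ≤ (K N t2 : ℝ) * l N ^ 2 := by gcongr
        have h6 := hK1 N t2 h2.1
        have h7 := hK2 N t1
        have : ((k : ℝ) - K N t1) * l N ^ 2 ≤ (t2 - t1) + l N ^ 2 := by linarith
        nlinarith
      have h5 := hsy N k hk
      have h6 : s N k - x t1 = (s N k - y N k) + (y N k - y N (K N t1)) + (y N (K N t1) - x t1) := by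
        abel
      rw [h6]
      refine (norm_add₃_le).trans ?_
      linarith
    have hlimK : Filter.Tendsto (fun N => ((K N t2 : ℝ) - K N t1) * l N ^ 2) 𝓤 (nhds (t2 - t1)) := by
      have := (hKd t2 h2).sub (hKd t1 h1)
      refine this.congr fun N => by ring
    refine le_of_tendsto_of_tendsto ?_ (hlimK.mul_const ε) e4
    exact ((((hx t2 h2).2.sub (hx t1 h1).2)).sub (hlimK.smul_const w)).norm
  have hLipx : ∀ t1 ∈ Icc 0 δ, ∀ t2 ∈ Icc 0 δ, t1 ≤ t2 → ‖x t2 - x t1‖ ≤ (t2 - t1) * C := by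
    intro t1 h1 t2 h2 h12
    have := hA t1 h1 t2 h2 h12 0 C 1 one_pos (fun u hu _ => by simpa using hFC u hu)
    simpa using this
  refine ⟨δ, hδ, x, ?_, fun t ht => hrO (hxO t ht), ?_, ?_⟩
  · have h0 : (0:ℝ) ∈ Icc 0 δ := ⟨le_rfl, hδ.le⟩
    have h1 := (hx 0 h0).2
    have h2 : (fun N => y N (K N 0)) = fun _ => z := by
      funext N; simp [K, hy0]
    rw [h2] at h1
    exact tendsto_nhds_unique h1 tendsto_const_nhds
  · intro t ht
    rw [hasDerivWithinAt_iff_isLittleO, Asymptotics.isLittleO_iff]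
    intro ε hε
    have hFx : ContinuousAt F (x t) := hF.continuousAt (hO.mem_nhds (hrO (hxO t ht)))
    obtain ⟨η, hη, hη2⟩ := Metric.continuousAt_iff.1 hFx ε hε
    have hn : ∀ᶠ t' in nhdsWithin t (Icc 0 δ), |t' - t| < η / (4 * C) := by
      apply nhdsWithin_le_nhds
      have := Metric.ball_mem_nhds t (show 0 < η / (4 * C) by positivity)
      filter_upwards [this] with t' h'
      simpa [Real.dist_eq] using h'
    filter_upwards [hn, self_mem_nhdsWithin] with t' hd ht'
    rw [lt_div_iff₀ (by positivity)] at hd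
    have key : ∀ u, ‖u - x t‖ < η → ‖F u - F (x t)‖ ≤ ε := by
      intro u hu
      have := hη2 (x := u) (by rwa [dist_eq_norm])
      rw [dist_eq_norm] at this
      exact this.le
    rcases le_total t t' with h | h
    · rw [abs_of_nonneg (by linarith)] at hd
      have := hA t ht t' ht' h (F (x t)) ε (η / 4) (by positivity) (fun u _ hu => key u (by linarith))
      rw [Real.norm_of_nonneg (by linarith)]
      linarith
    · rw [abs_of_nonpos (by linarith)] at hd
      have := hA t' ht' t ht h (F (x t)) ε (η / 4) (by positivity) (fun u _ hu => key u (by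
        have h1 := hLipx t' ht' t ht h
        rw [norm_sub_rev] at h1
        have h2 : u - x t = (u - x t') + (x t' - x t) := by abel
        rw [h2]
        refine (norm_add_le _ _).trans_lt ?_
        linarith))
      rw [Real.norm_of_nonpos (by linarith)]
      have h3 : x t' - x t - (t' - t) • F (x t) = -(x t - x t' - (t - t') • F (x t)) := by
        rw [sub_smul, sub_smul]; abel
      rw [h3, norm_neg]
      linarith
  · intro t1 h1 t2 h2 h12
    have hz : Filter.Tendsto (fun N => W N (K N t1) - (δ * C ^ 2 / 2) * l N) 𝓤 (nhds (V (x t1))) := by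
      simpa using (hWx t1 h1).sub (hlimU.const_mul (δ * C ^ 2 / 2))
    refine le_of_tendsto_of_tendsto' hz (hWx t2 h2) fun N => ?_
    have hst : ∀ k, K N t1 ≤ k → k ≤ K N t2 →
        W N (K N t1) - ((k : ℝ) - K N t1) * (l N ^ 3 * C ^ 2 / 2) ≤ W N k := by
      intro k hk
      induction k, hk using Nat.le_induction with
      | base => intro _; simp
      | succ k hk ih =>
        intro hk2
        have i1 := ih (by omega)
        have i2 := (hP N k (hval N t2 h2 k (by omega))).2.2.2.2.2 (hval N t2 h2 (k + 1) hk2)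
        push_cast
        linarith
    have h3 := hst _ (hKm N _ _ h12) le_rfl
    have h4 : ((K N t2 : ℝ) - K N t1) * l N ^ 2 ≤ δ := by
      have := hK1 N t2 h2.1
      have h5 : 0 ≤ (K N t1 : ℝ) * l N ^ 2 := by positivity
      linarith [h2.2]
    have h5 : ((K N t2 : ℝ) - K N t1) * l N ^ 2 * (l N * C ^ 2 / 2) ≤ δ * (l N * C ^ 2 / 2) := by
      have := hl0 N
      gcongr
    have h6 : ((K N t2 : ℝ) - K N t1) * (l N ^ 3 * C ^ 2 / 2)
      = ((K N t2 : ℝ) - K N t1) * l N ^ 2 * (l N * C ^ 2 / 2) := by ring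
    have h7 : δ * (l N * C ^ 2 / 2) = (δ * C ^ 2 / 2) * l N := by ring
    linarith

/-- Solutions on `[0,b)` of the closed loop system along which `V` is nondecreasing. -/
def IsSol {E : Type*} [NormedAddCommGroup E] [InnerProductSpace ℝ E]
    (O : Set E) (V : E → ℝ) (F : E → E) (z : E) (b : ℝ) (x : ℝ → E) : Prop :=
  0 < b ∧ x 0 = z ∧ (∀ t ∈ Ico 0 b, x t ∈ O) ∧
    (∀ t ∈ Ico 0 b, HasDerivWithinAt x (F (x t)) (Ico 0 b) t) ∧
    MonotoneOn (fun t => V (x t)) (Ico 0 b)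

lemma IsSol.extend {E : Type*} [NormedAddCommGroup E] [InnerProductSpace ℝ E]
    [FiniteDimensional ℝ E] (O : Set E) (hO : IsOpen O) (V : E → ℝ) (F : E → E)
    (hV : ContinuousOn V O) (hF : ContinuousOn F O)
    (hvis : ∀ x ∈ O, ∀ y : E, ∀ l : ℝ, 0 < l →
      IsLocalMax (fun u => V u - ‖u - y‖ ^ 2 / (2 * l)) x → 0 ≤ ⟪F x, x - y⟫)
    (z : E) (b : ℝ) (x : ℝ → E) (hx : IsSol O V F z b x) (e : E) (he : e ∈ O)
    (hlim : Filter.Tendsto x (nhdsWithin b (Iio b)) (nhds e)) :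
    ∃ b' x', b < b' ∧ IsSol O V F z b' x' ∧ EqOn x x' (Ico 0 b) := by
  obtain ⟨δ, hδ, u, hu0, huO, hud, hum⟩ := local_exist O hO V F hV hF hvis e he
  obtain ⟨hb, hx0, hxO, hxd, hxm⟩ := hx
  let w : ℝ → E := fun t => if t < b then x t else u (t - b)
  have hw1 : ∀ t, t < b → w t = x t := fun t h => if_pos h
  have hw2 : ∀ t, b ≤ t → w t = u (t - b) := fun t h => if_neg (not_lt.2 h)
  have hwb : w b = e := by rw [hw2 b le_rfl, sub_self, hu0]
  have hshift : ∀ t ∈ Icc b (b + δ), t - b ∈ Icc 0 δ := fun t ht =>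
    ⟨by linarith [ht.1], by linarith [ht.2]⟩
  have hr : ∀ t ∈ Icc b (b + δ), HasDerivWithinAt w (F (w t)) (Icc b (b + δ)) t := by
    intro t ht
    have h1 := hud (t - b) (hshift t ht)
    have h2 : HasDerivWithinAt (fun τ => u (τ - b)) ((1:ℝ) • F (u (t - b))) (Icc b (b + δ)) t :=
      h1.scomp t ((hasDerivWithinAt_id t _).sub_const b) hshift
    rw [one_smul] at h2
    rw [hw2 t ht.1]
    exact h2.congr (fun τ hτ => hw2 τ hτ.1) (hw2 t ht.1)
  have hwl : Filter.Tendsto w (nhdsWithin b (Iio b)) (nhds e) :=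
    hlim.congr' (by filter_upwards [self_mem_nhdsWithin] with t ht using (hw1 t ht).symm)
  have hD : ∀ t ∈ Ioo 0 b, HasDerivAt w (F (w t)) t := by
    intro t ht
    have h1 := (hxd t ⟨ht.1.le, ht.2⟩).hasDerivAt (Ico_mem_nhds ht.1 ht.2)
    rw [hw1 t ht.2]
    apply h1.congr_of_eventuallyEq
    filter_upwards [Iio_mem_nhds ht.2] with τ hτ using hw1 τ hτ
  have hl : HasDerivWithinAt w (F e) (Iic b) b := by
    have hs : Ioo 0 b ∈ nhdsWithin b (Iio b) := Ioo_mem_nhdsLT hb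
    apply hasDerivWithinAt_Iic_of_tendsto_deriv (s := Ioo 0 b)
    · intro t ht
      exact (hD t ht).differentiableAt.differentiableWithinAt
    · show Filter.Tendsto w _ (nhds (w b))
      rw [hwb]
      exact hwl.mono_left (nhdsWithin_mono _ fun t ht => ht.2)
    · exact hs
    · have h2 : Filter.Tendsto (fun t => F (w t)) (nhdsWithin b (Iio b)) (nhds (F e)) :=
        (hF.continuousAt (hO.mem_nhds he)).tendsto.comp hwl
      apply h2.congr'
      filter_upwards [hs] with t ht using (hD t ht).deriv.symm
  have hwm1 : ∀ t ∈ Ico 0 b, V (w t) ≤ V e := by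
    intro t ht
    rw [hw1 t ht.2]
    have h2 : Filter.Tendsto (fun t => V (x t)) (nhdsWithin b (Iio b)) (nhds (V e)) :=
      (hV.continuousAt (hO.mem_nhds he)).tendsto.comp hlim
    apply ge_of_tendsto h2
    filter_upwards [Ioo_mem_nhdsLT ht.2] with τ hτ
    exact hxm ht ⟨ht.1.trans hτ.1.le, hτ.2⟩ hτ.1.le
  refine ⟨b + δ, w, by linarith, ⟨by linarith, ?_, ?_, ?_, ?_⟩, fun t ht => (hw1 t ht.2).symm⟩
  · rw [hw1 0 hb, hx0]
  · intro t ht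
    rcases lt_or_ge t b with h | h
    · rw [hw1 t h]; exact hxO t ⟨ht.1, h⟩
    · rw [hw2 t h]; exact huO _ (hshift t ⟨h, ht.2.le⟩)
  · intro t ht
    rcases lt_trichotomy t b with h | h | h
    · have h1 := hxd t ⟨ht.1, h⟩
      rw [hw1 t h]
      have h2 : HasDerivWithinAt x (F (x t)) (Ico 0 (b + δ)) t := by
        apply h1.mono_of_mem_nhdsWithin
        filter_upwards [self_mem_nhdsWithin, nhdsWithin_le_nhds (Iio_mem_nhds h)] with τ h3 h4
        exact ⟨h3.1, h4⟩
      apply h2.congr_of_eventuallyEq _ (hw1 t h)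
      filter_upwards [nhdsWithin_le_nhds (Iio_mem_nhds h)] with τ h4 using hw1 τ h4
    · subst h
      have h1 := hr t ⟨le_rfl, by linarith⟩
      rw [hwb] at h1 ⊢
      refine (hl.union h1).mono ?_
      intro τ hτ
      rcases le_total τ t with h | h
      · exact Or.inl h
      · exact Or.inr ⟨h, hτ.2.le⟩
    · apply (hr t ⟨h.le, ht.2.le⟩).mono_of_mem_nhdsWithin
      filter_upwards [self_mem_nhdsWithin, nhdsWithin_le_nhds (Ioi_mem_nhds h)] with τ h3 h4
      exact ⟨le_of_lt h4, h3.2.le⟩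
  · have hm2 : ∀ t ∈ Ico b (b + δ), V e ≤ V (w t) := by
      intro t ht
      rw [hw2 t ht.1, ← hu0]
      exact hum ⟨le_rfl, hδ.le⟩ (hshift t ⟨ht.1, ht.2.le⟩) (by linarith [ht.1])
    intro t1 h1 t2 h2 h12
    show V (w t1) ≤ V (w t2)
    rcases lt_or_ge t2 b with h | h
    · rw [hw1 t2 h, hw1 t1 (h12.trans_lt h)]
      exact hxm ⟨h1.1, h12.trans_lt h⟩ ⟨h2.1, h⟩ h12
    · rcases lt_or_ge t1 b with h' | h'
      · exact (hwm1 t1 ⟨h1.1, h'⟩).trans (hm2 t2 ⟨h, h2.2⟩)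
      · rw [hw2 t2 h, hw2 t1 h']
        exact hum (hshift t1 ⟨h', h1.2.le⟩) (hshift t2 ⟨h, h2.2.le⟩) (by linarith)

lemma exists_maximal_sol {E : Type*} [NormedAddCommGroup E] [InnerProductSpace ℝ E]
    [FiniteDimensional ℝ E] (O : Set E) (hO : IsOpen O) (V : E → ℝ) (F : E → E)
    (hV : ContinuousOn V O) (hF : ContinuousOn F O)
    (hvis : ∀ x ∈ O, ∀ y : E, ∀ l : ℝ, 0 < l →
      IsLocalMax (fun u => V u - ‖u - y‖ ^ 2 / (2 * l)) x → 0 ≤ ⟪F x, x - y⟫)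
    (z : E) (hz : z ∈ O) (B : ℝ) (hB : ∀ b x, IsSol O V F z b x → b ≤ B) :
    ∃ b x, IsSol O V F z b x ∧
      ∀ e ∈ O, ¬ Filter.Tendsto x (nhdsWithin b (Iio b)) (nhds e) := by
  let α := {p : ℝ × (ℝ → E) // IsSol O V F z p.1 p.2}
  let R : α → α → Prop := fun p q => p.1.1 ≤ q.1.1 ∧ EqOn p.1.2 q.1.2 (Ico 0 p.1.1)
  have hne : Nonempty α := by
    obtain ⟨δ, hδ, u, hu0, huO, hud, hum⟩ := local_exist O hO V F hV hF hvis z hz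
    exact ⟨⟨(δ, u), hδ, hu0, fun t ht => huO t ⟨ht.1, ht.2.le⟩,
      fun t ht => (hud t ⟨ht.1, ht.2.le⟩).mono Ico_subset_Icc_self, hum.mono Ico_subset_Icc_self⟩⟩
  obtain ⟨p, hp⟩ := exists_maximal_of_nonempty_chains_bounded (r := R) (by
    intro c hc hcn
    have hagree : ∀ p ∈ c, ∀ q ∈ c, ∀ t, 0 ≤ t → t < p.1.1 → t < q.1.1 → p.1.2 t = q.1.2 t := by
      intro p hp q hq t h0 h1 h2
      by_cases h : p = q
      · rw [h]
      · rcases hc hp hq h with h | h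
        · exact h.2 ⟨h0, h1⟩
        · exact (h.2 ⟨h0, h2⟩).symm
    let S : Set ℝ := (fun p : α => p.1.1) '' c
    have hSb : BddAbove S := ⟨B, by rintro _ ⟨p, _, rfl⟩; exact hB _ _ p.2⟩
    have hSn : S.Nonempty := hcn.image _
    let b := sSup S
    have hle : ∀ p ∈ c, p.1.1 ≤ b := fun p hp => le_csSup hSb ⟨p, hp, rfl⟩
    have hex : ∀ t, t < b → ∃ p ∈ c, t < p.1.1 := by
      intro t ht
      obtain ⟨_, ⟨p, hp, rfl⟩, h⟩ := exists_lt_of_lt_csSup hSn ht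
      exact ⟨p, hp, h⟩
    have hxx : ∃ x : ℝ → E, ∀ p ∈ c, EqOn p.1.2 x (Ico 0 p.1.1) := by
      have : ∀ t : ℝ, ∃ v : E, ∀ p ∈ c, t ∈ Ico 0 p.1.1 → p.1.2 t = v := by
        intro t
        by_cases h : ∃ p ∈ c, t ∈ Ico 0 p.1.1
        · obtain ⟨p, hp, ht⟩ := h
          exact ⟨p.1.2 t, fun q hq hq2 => hagree q hq p hp t ht.1 hq2.2 ht.2⟩
        · exact ⟨z, fun p hp ht => absurd ⟨p, hp, ht⟩ h⟩
      choose x hx using this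
      exact ⟨x, fun p hp t ht => hx t p hp ht⟩
    obtain ⟨x, hx⟩ := hxx
    refine ⟨⟨(b, x), ?_⟩, fun p hp => ⟨hle p hp, hx p hp⟩⟩
    obtain ⟨p0, hp0⟩ := hcn
    refine ⟨p0.2.1.trans_le (hle p0 hp0), ?_, ?_, ?_, ?_⟩
    · show x 0 = z
      rw [← hx p0 hp0 ⟨le_rfl, p0.2.1⟩]; exact p0.2.2.1
    · intro t ht
      obtain ⟨p, hp, h⟩ := hex t ht.2
      show x t ∈ O
      rw [← hx p hp ⟨ht.1, h⟩]
      exact p.2.2.2.1 t ⟨ht.1, h⟩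
    · intro t ht
      obtain ⟨p, hp, h⟩ := hex t ht.2
      have h1 := p.2.2.2.2.1 t ⟨ht.1, h⟩
      show HasDerivWithinAt x (F (x t)) (Ico 0 b) t
      rw [hx p hp ⟨ht.1, h⟩] at h1
      have h2 : HasDerivWithinAt x (F (x t)) (Ico 0 p.1.1) t :=
        h1.congr (fun τ hτ => (hx p hp hτ).symm) (hx p hp ⟨ht.1, h⟩).symm
      apply h2.mono_of_mem_nhdsWithin
      filter_upwards [self_mem_nhdsWithin, nhdsWithin_le_nhds (Iio_mem_nhds h)] with τ h3 h4
      exact ⟨h3.1, h4⟩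
    · intro t1 h1 t2 h2 h12
      obtain ⟨p, hp, h⟩ := hex t2 h2.2
      show V (x t1) ≤ V (x t2)
      rw [← hx p hp ⟨h1.1, h12.trans_lt h⟩, ← hx p hp ⟨h2.1, h⟩]
      exact p.2.2.2.2.2 ⟨h1.1, h12.trans_lt h⟩ ⟨h2.1, h⟩ h12) (by
    intro p q s h1 h2
    exact ⟨h1.1.trans h2.1, fun t ht => (h1.2 ht).trans (h2.2 ⟨ht.1, ht.2.trans_le h1.1⟩)⟩)
  refine ⟨p.1.1, p.1.2, p.2, fun e he hlim => ?_⟩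
  obtain ⟨b', x', hlt, hsol, heq⟩ := IsSol.extend O hO V F hV hF hvis z _ _ p.2 e he hlim
  have := (hp ⟨(b', x'), hsol⟩ ⟨hlt.le, heq⟩).1
  exact absurd hlt (not_lt.2 this)

lemma meas_select {E X : Type*} [NormedAddCommGroup E] [NormedAddCommGroup X] [MeasurableSpace X]
    [BorelSpace X] (A : Set X) (hAc : IsCompact A) (b : ℝ) (g : ℝ → X → E)
    (hg : ContinuousOn (fun q : ℝ × X => g q.1 q.2) (Ico 0 b ×ˢ A)) (y : ℝ → E)
    (hy : ContinuousOn y (Ico 0 b)) (hex : ∀ t ∈ Ico 0 b, ∃ a ∈ A, g t a = y t)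
    (a0 : X) (ha0 : a0 ∈ A) :
    ∃ a : ℝ → X, Measurable a ∧ (∀ t, a t ∈ A) ∧ (∀ t ∈ Ico 0 b, g t (a t) = y t) ∧
      ∀ t, t ∉ Ico 0 b → a t = a0 := by
  classical
  have : CompactSpace A := isCompact_iff_compactSpace.1 hAc
  have : Nonempty A := ⟨⟨a0, ha0⟩⟩
  have : CompactSpace cantorSet := isCompact_iff_compactSpace.1 isCompact_cantorSet
  obtain ⟨c, hc, hcs⟩ := exists_nat_bool_continuous_surjective_of_compact A
  let G : cantorSet → A := fun r => c (cantorSetHomeomorphNatToBool r)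
  have hG : Continuous G := hc.comp cantorSetHomeomorphNatToBool.continuous
  have hGs : Function.Surjective G := hcs.comp cantorSetHomeomorphNatToBool.surjective
  have hgc : Continuous (fun q : (Ico 0 b) × cantorSet => g (q.1 : ℝ) (G q.2 : X)) := by
    have := continuousOn_iff_continuous_domRestrict.1 hg
    exact this.comp (f := fun q : (Ico 0 b) × cantorSet =>
      (⟨((q.1 : ℝ), (G q.2 : X)), ⟨q.1.2, (G q.2).2⟩⟩ : (Ico 0 b ×ˢ A : Set (ℝ × X))))
      (by fun_prop)
  have hyc : Continuous (fun t : Ico 0 b => y (t : ℝ)) := continuousOn_iff_continuous_domRestrict.1 hy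
  have hleast : ∀ t : Ico 0 b, ∃ r : cantorSet, IsLeast {r : cantorSet | g t (G r) = y t} r := by
    intro t
    apply IsCompact.exists_isLeast
    · apply IsClosed.isCompact
      exact isClosed_eq (hgc.comp (Continuous.prodMk_right t)) continuous_const
    · obtain ⟨a, ha, h⟩ := hex t t.2
      obtain ⟨r, hr⟩ := hGs ⟨a, ha⟩
      exact ⟨r, by simp [hr, h]⟩
  choose σ hσ using hleast
  have hσm : Measurable σ := by
    rw [← (MeasurableEmbedding.subtype_coe isCompact_cantorSet.isClosed.measurableSet).measurable_comp_iff]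
    apply measurable_of_Iic
    intro r
    have : ((fun t => ((σ t : cantorSet) : ℝ)) ⁻¹' Iic r)
        = Prod.fst '' {q : (Ico 0 b) × cantorSet | (q.2 : ℝ) ≤ r ∧ g q.1 (G q.2) = y q.1} := by
      ext t
      constructor
      · intro h
        exact ⟨(t, σ t), ⟨h, (hσ t).1⟩, rfl⟩
      · rintro ⟨⟨t', u⟩, ⟨h1, h2⟩, rfl⟩
        have := (hσ t').2 h2
        exact le_trans (Subtype.coe_le_coe.2 this) h1
    show MeasurableSet ((fun t => ((σ t : cantorSet) : ℝ)) ⁻¹' Iic r)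
    rw [this]
    apply IsClosed.measurableSet
    apply isClosedMap_fst_of_compactSpace
    apply IsClosed.and
    · exact isClosed_le (by fun_prop) continuous_const
    · exact isClosed_eq hgc (hyc.comp continuous_fst)
  have hfm : Measurable (fun t : Ico 0 b => (G (σ t) : X)) :=
    ((continuous_subtype_val.comp hG).measurable).comp hσm
  refine ⟨fun t => if h : t ∈ Ico 0 b then (G (σ ⟨t, h⟩) : X) else a0, ?_, ?_, ?_, ?_⟩
  · exact Measurable.dite hfm measurable_const measurableSet_Ico
  · intro t
    by_cases h : t ∈ Ico 0 b
    · simp only [h, dif_pos]; exact (G _).2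
    · simp only [h, dif_neg, not_false_iff]; exact ha0
  · intro t h
    simp only [h, dif_pos]
    exact (hσ ⟨t, h⟩).1
  · intro t h
    simp only [h, dif_neg, not_false_iff]

lemma adm_of_sol {n m : ℕ} (Ω : Set (EuclideanSpace ℝ (Fin n)))
    (A : Set (EuclideanSpace ℝ (Fin m))) (hAc : IsCompact A)
    (f : EuclideanSpace ℝ (Fin n) → EuclideanSpace ℝ (Fin m) → EuclideanSpace ℝ (Fin n))
    (hfc : ContinuousOn (fun q : EuclideanSpace ℝ (Fin n) × EuclideanSpace ℝ (Fin m) =>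
      f q.1 q.2) (Ω ×ˢ A))
    (b : ℝ) (hb : 0 < b) (g v : ℝ → EuclideanSpace ℝ (Fin n)) (hg : Continuous g)
    (hgΩ : ∀ t ∈ Ico 0 b, g t ∈ Ω)
    (hgd : ∀ t ∈ Ico 0 b, HasDerivWithinAt g (v t) (Ico 0 b) t)
    (hv : ContinuousOn v (Ico 0 b)) (C : ℝ) (hvC : ∀ t ∈ Ico 0 b, ‖v t‖ ≤ C)
    (hex : ∀ t ∈ Ico 0 b, ∃ a ∈ A, f (g t) a = v t)
    (a0 : EuclideanSpace ℝ (Fin m)) (ha0 : a0 ∈ A) (hfa0 : f (g b) a0 = 0) :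
    IsAdmTraj A f (g 0) (fun t => g (min t b)) := by
  have hcont : Continuous (fun t => g (min t b)) := by fun_prop
  obtain ⟨a, ham, haA, ha1, ha2⟩ := meas_select A hAc b (fun t c => f (g t) c) (by
    refine hfc.comp (f := fun q : ℝ × EuclideanSpace ℝ (Fin m) => (g q.1, q.2)) (by fun_prop) ?_
    intro q hq
    exact ⟨hgΩ _ hq.1, hq.2⟩) v hv hex a0 ha0
  refine ⟨by simp [hb.le], hcont.continuousOn, a, ham, haA, ?_⟩
  have hin : ∀ s, 0 ≤ s → f (g (min s b)) (a s) = (Ico 0 b).indicator v s := by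
    intro s hs
    by_cases h : s < b
    · rw [indicator_of_mem (show s ∈ Ico 0 b from ⟨hs, h⟩), min_eq_left h.le]
      exact ha1 s ⟨hs, h⟩
    · have h' : s ∉ Ico 0 b := fun h'' => h h''.2
      rw [indicator_of_notMem h', min_eq_right (not_lt.1 h), ha2 s h', hfa0]
  have hint : Integrable ((Ico 0 b).indicator v) := by
    rw [integrable_indicator_iff measurableSet_Ico]
    refine ⟨hv.aestronglyMeasurable measurableSet_Ico, ?_⟩
    apply HasFiniteIntegral.restrict_of_bounded (C := C) (by simp)
    exact (ae_restrict_iff' measurableSet_Ico).2 (Filter.Eventually.of_forall hvC)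
  intro t ht
  have key := intervalIntegral.integral_eq_sub_of_hasDeriv_right_of_le
    (f := fun t => g (min t b)) (f' := (Ico 0 b).indicator v) ht hcont.continuousOn (by
      intro s hs
      by_cases h : s < b
      · rw [indicator_of_mem (show s ∈ Ico 0 b from ⟨hs.1.le, h⟩)]
        have h1 := (hgd s ⟨hs.1.le, h⟩).hasDerivAt (Ico_mem_nhds hs.1 h)
        apply HasDerivAt.hasDerivWithinAt
        apply h1.congr_of_eventuallyEq
        filter_upwards [Iio_mem_nhds h] with τ hτ
        rw [min_eq_left (le_of_lt hτ)]
      · have h' : s ∉ Ico 0 b := fun h'' => h h''.2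
        rw [indicator_of_notMem h']
        apply (hasDerivWithinAt_const s (Ioi s) (g b)).congr
        · intro τ hτ
          rw [min_eq_right ((not_lt.1 h).trans (le_of_lt hτ))]
        · rw [min_eq_right (not_lt.1 h)]) hint.intervalIntegrable
  have h2 : ∫ s in (0:ℝ)..t, f (g (min s b)) (a s) = ∫ s in (0:ℝ)..t, (Ico 0 b).indicator v s := by
    apply intervalIntegral.integral_congr
    intro s hs
    rw [uIcc_of_le ht] at hs
    exact hin s hs.1
  show g (min t b) = g 0 + ∫ s in (0:ℝ)..t, f (g (min s b)) (a s)
  rw [h2, key, min_eq_left hb.le]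
  abel

lemma H_bound {E X : Type*} [NormedAddCommGroup E] [InnerProductSpace ℝ E]
    (Ω : Set E) (A : Set X) (f : E → X → E)
    (L : ℝ) (hLip : ∀ a ∈ A, ∀ x ∈ Ω, ∀ y ∈ Ω, ‖f x a - f y a‖ ≤ L * ‖x - y‖)
    (H : E → E → ℝ) (hH : ∀ x p, IsGreatest ((fun a => -⟪f x a, p⟫) '' A) (H x p))
    (x y p q : E) (hx : x ∈ Ω) (hy : y ∈ Ω) (C : ℝ) (hC : ∀ a ∈ A, ‖f y a‖ ≤ C) :
    |H x p - H y q| ≤ L * ‖x - y‖ * ‖p‖ + C * ‖p - q‖ := by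
  have key : ∀ a ∈ A, |(-⟪f x a, p⟫) - (-⟪f y a, q⟫)| ≤ L * ‖x - y‖ * ‖p‖ + C * ‖p - q‖ := by
    intro a ha
    have h1 : (-⟪f x a, p⟫) - (-⟪f y a, q⟫) = -(⟪f x a - f y a, p⟫ + ⟪f y a, p - q⟫) := by
      rw [inner_sub_left, inner_sub_right]; ring
    rw [h1, abs_neg]
    refine (abs_add_le _ _).trans (add_le_add ?_ ?_)
    · exact (abs_real_inner_le_norm _ _).trans
        (mul_le_mul_of_nonneg_right (hLip a ha x hx y hy) (norm_nonneg _))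
    · exact (abs_real_inner_le_norm _ _).trans
        (mul_le_mul_of_nonneg_right (hC a ha) (norm_nonneg _))
  rw [abs_le]
  constructor
  · obtain ⟨a, ha, h⟩ := (hH y q).1
    have h1 := (hH x p).2 ⟨a, ha, rfl⟩
    have h2 := (abs_le.1 (key a ha)).1
    simp only at h h1
    linarith
  · obtain ⟨a, ha, h⟩ := (hH x p).1
    have h1 := (hH y q).2 ⟨a, ha, rfl⟩
    have h2 := (abs_le.1 (key a ha)).2
    simp only at h h1
    linarith

lemma H_continuousOn {E X : Type*} [NormedAddCommGroup E] [InnerProductSpace ℝ E]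
    (Ω : Set E) (A : Set X) (f : E → X → E)
    (hbd : ∀ x ∈ Ω, ∃ C, ∀ a ∈ A, ‖f x a‖ ≤ C)
    (L : ℝ) (hLip : ∀ a ∈ A, ∀ x ∈ Ω, ∀ y ∈ Ω, ‖f x a - f y a‖ ≤ L * ‖x - y‖)
    (H : E → E → ℝ) (hH : ∀ x p, IsGreatest ((fun a => -⟪f x a, p⟫) '' A) (H x p)) :
    ContinuousOn (fun q : E × E => H q.1 q.2) (Ω ×ˢ univ) := by
  rintro ⟨y, q⟩ ⟨hy, -⟩
  obtain ⟨C, hC⟩ := hbd y hy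
  rw [ContinuousWithinAt, tendsto_iff_norm_sub_tendsto_zero]
  have hlim : Filter.Tendsto (fun w : E × E => L * ‖w.1 - y‖ * ‖w.2‖ + C * ‖w.2 - q‖)
      (nhdsWithin (y, q) (Ω ×ˢ univ)) (nhds 0) := by
    have hc : Continuous (fun w : E × E => L * ‖w.1 - y‖ * ‖w.2‖ + C * ‖w.2 - q‖) := by fun_prop
    have := hc.tendsto (y, q)
    simp only [sub_self, norm_zero, mul_zero, zero_mul, add_zero] at this
    exact this.mono_left nhdsWithin_le_nhds
  refine squeeze_zero' (Filter.Eventually.of_forall fun w => norm_nonneg _) ?_ hlim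
  filter_upwards [self_mem_nhdsWithin] with w hw
  exact H_bound Ω A f L hLip H hH w.1 y w.2 q hw.1 hy C hC

lemma Hp_mem {E X : Type*} [NormedAddCommGroup E] [InnerProductSpace ℝ E] [CompleteSpace E]
    (A : Set X) (f : E → X → E)
    (H : E → E → ℝ) (hH : ∀ x p, IsGreatest ((fun a => -⟪f x a, p⟫) '' A) (H x p))
    (x p h : E) (hHp : HasGradientAt (H x) h p) :
    (∃ a ∈ A, f x a = -h) ∧ ⟪p, -h⟫ = -H x p := by
  obtain ⟨a, ha, hmax⟩ := (hH x p).1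
  simp only at hmax
  have hd := (hasGradientAt_iff_hasFDerivAt.1 hHp).add ((innerSL ℝ (f x a)).hasFDerivAt (x := p))
  have hmin : IsLocalMin (fun q => H x q + innerSL ℝ (f x a) q) p := by
    refine Filter.Eventually.of_forall fun q => ?_
    have h1 := (hH x q).2 ⟨a, ha, rfl⟩
    simp only [innerSL_apply_apply] at h1 ⊢
    linarith
  have h0 := hmin.hasFDerivAt_eq_zero hd
  have he : f x a = -h := by
    have : h + f x a = 0 := by
      apply ext_inner_right ℝ
      intro v
      have := congrArg (fun φ => φ v) h0
      simpa [inner_add_left] using this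
    exact eq_neg_of_add_eq_zero_right this
  refine ⟨⟨a, ha, he⟩, ?_⟩
  rw [← he, real_inner_comm]
  linarith

lemma gradient_quad {E : Type*} [NormedAddCommGroup E] [InnerProductSpace ℝ E] [CompleteSpace E]
    (y x : E) (l : ℝ) :
    gradient (fun u => ‖u - y‖ ^ 2 / (2 * l)) x = (1 / l) • (x - y) := by
  apply HasGradientAt.gradient
  rw [hasGradientAt_iff_hasFDerivAt]
  have h1 : HasFDerivAt (fun u : E => ‖u - y‖ ^ 2) _ x :=
    ((hasFDerivAt_id x).sub_const y).norm_sq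
  have h2 := h1.mul_const (1 / (2 * l))
  refine (h2.congr_of_eventuallyEq (Filter.Eventually.of_forall fun u => ?_)).congr_fderiv ?_
  · ring
  · ext v
    simp
    ring

/-- from a `C¹`-supersolution of the Aronsson equation one builds a
closed-loop trajectory along which the Hamiltonian is nondecreasing, `U` is strictly
decreasing, which reaches the target in time at most `U(x₀)/H(x₀,∇U(x₀))`; hence the
minimum time function satisfies `T(x₀) ≤ U(x₀)/H(x₀,∇U(x₀))`. -/
theorem stmt_7 {n m : ℕ} (Ω : Set (EuclideanSpace ℝ (Fin n))) (hΩo : IsOpen Ω)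
    (T : Set (EuclideanSpace ℝ (Fin n))) (hT : IsClosed T) (hTΩ : T ⊆ Ω)
    (A : Set (EuclideanSpace ℝ (Fin m))) (hA : A.Nonempty) (hAc : IsCompact A)
    (f : EuclideanSpace ℝ (Fin n) → EuclideanSpace ℝ (Fin m) → EuclideanSpace ℝ (Fin n))
    (hfc : ContinuousOn (fun q : EuclideanSpace ℝ (Fin n) × EuclideanSpace ℝ (Fin m) =>
      f q.1 q.2) (Ω ×ˢ A))
    (L : ℝ) (hLip : ∀ a ∈ A, ∀ x ∈ Ω, ∀ y ∈ Ω, ‖f x a - f y a‖ ≤ L * ‖x - y‖)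
    (hconv : ∀ x ∈ Ω, Convex ℝ (f x '' A))
    (hsymm : ∀ x ∈ Ω, ∀ a ∈ A, ∃ a' ∈ A, f x a' = -f x a)
    (H : EuclideanSpace ℝ (Fin n) → EuclideanSpace ℝ (Fin n) → ℝ)
    (hH : ∀ x p, IsGreatest ((fun a => -⟪f x a, p⟫) '' A) (H x p))
    (Hp : EuclideanSpace ℝ (Fin n) → EuclideanSpace ℝ (Fin n) → EuclideanSpace ℝ (Fin n))
    (hHp : ∀ x p, 0 < H x p → HasGradientAt (H x) (Hp x p) p)
    (hHpc : ContinuousOn (fun q : EuclideanSpace ℝ (Fin n) × EuclideanSpace ℝ (Fin n) =>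
      Hp q.1 q.2) {q | 0 < H q.1 q.2})
    (U : EuclideanSpace ℝ (Fin n) → ℝ) (M : ℝ) (hM : 0 < M)
    (hUc : ContinuousOn U (closure (Ω \ T)))
    (hU1 : ContDiffOn ℝ 1 U (Ω \ (T ∩ {x | H x (gradient U x) = 0})))
    (hUnn : ∀ x ∈ closure (Ω \ T), 0 ≤ U x)
    (hUT : ∀ x ∈ T, U x = 0) (hUfr : ∀ x ∈ frontier Ω, U x = M)
    (hUΩ : ∀ x ∈ Ω \ T, 0 < U x ∧ U x < M)
    -- `U` is a `C¹`-supersolution of the Aronsson equation on `Ω \ (T ∩ ℋ)`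
    (hsub : ∀ φ : EuclideanSpace ℝ (Fin n) → ℝ, ContDiff ℝ 1 φ →
      ∀ x₀ ∈ Ω \ (T ∩ {x | H x (gradient U x) = 0}), 0 < H x₀ (gradient U x₀) →
      IsLocalMaxOn (fun x => H x (gradient U x) - φ x)
        (Ω \ (T ∩ {x | H x (gradient U x) = 0})) x₀ →
      -⟪-(Hp x₀ (gradient U x₀)), gradient φ x₀⟫ ≤ 0)
    (hsup : ∀ φ : EuclideanSpace ℝ (Fin n) → ℝ, ContDiff ℝ 1 φ →
      ∀ x₀ ∈ Ω \ (T ∩ {x | H x (gradient U x) = 0}), 0 < H x₀ (gradient U x₀) →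
      IsLocalMinOn (fun x => H x (gradient U x) - φ x)
        (Ω \ (T ∩ {x | H x (gradient U x) = 0})) x₀ →
      0 ≤ ⟪-(Hp x₀ (gradient U x₀)), gradient φ x₀⟫) :
    ∀ x₀ ∈ Ω, x₀ ∉ T → 0 < H x₀ (gradient U x₀) →
      ∃ tbar : ℝ, 0 ≤ tbar ∧ tbar ≤ U x₀ / H x₀ (gradient U x₀) ∧
        ∃ x : ℝ → EuclideanSpace ℝ (Fin n), x 0 = x₀ ∧
          (∀ t ∈ Ico (0:ℝ) tbar, x t ∈ Ω \ T) ∧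
          (∀ t ∈ Icc (0:ℝ) tbar, x t ∈ closure Ω) ∧
          (∀ t ∈ Ico (0:ℝ) tbar,
            HasDerivWithinAt x (-(Hp (x t) (gradient U (x t)))) (Ico (0:ℝ) tbar) t) ∧
          -- (i) the Hamiltonian is nondecreasing along the trajectory
          MonotoneOn (fun t => H (x t) (gradient U (x t))) (Ico (0:ℝ) tbar) ∧
          -- (ii) `U` is strictly decreasing along the trajectory
          StrictAntiOn (fun t => U (x t)) (Icc (0:ℝ) tbar) ∧
          -- (iii) the target is reached at time `tbar` and the minimum time
          -- function satisfies the announced bound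
          x tbar ∈ T ∧
          (reachTimes Ω T A f x₀).Nonempty ∧
          sInf (reachTimes Ω T A f x₀) ≤ U x₀ / H x₀ (gradient U x₀) := by
  intro x₀ hx₀ hx₀T hV₀
  -- the gradient vanishes on the target
  have hU0 : ∀ u ∈ Ω, 0 ≤ U u := by
    intro u hu
    by_cases h : u ∈ T
    · exact (hUT u h).ge
    · exact (hUΩ u ⟨hu, h⟩).1.le
  have hH0 : ∀ x, H x 0 = 0 := by
    intro x
    obtain ⟨a, _, h⟩ := (hH x 0).1
    simpa using h.symm
  have hgT : ∀ x ∈ T, gradient U x = 0 := by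
    intro x hx
    have hmin : IsLocalMin U x := by
      filter_upwards [hΩo.mem_nhds (hTΩ hx)] with u hu
      rw [hUT x hx]
      exact hU0 u hu
    simp [gradient, hmin.fderiv_eq_zero]
  have hset : Ω \ (T ∩ {x | H x (gradient U x) = 0}) = Ω \ T := by
    congr 1
    ext x
    refine ⟨fun h => h.1, fun h => ⟨h, ?_⟩⟩
    show H x (gradient U x) = 0
    rw [hgT x h, hH0]
  rw [hset] at hU1 hsub
  clear hsup hset
  have hDo : IsOpen (Ω \ T) := hΩo.sdiff hT
  have hgrad : ∀ x ∈ Ω \ T, HasGradientAt U (gradient U x) x := fun x hx =>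
    ((hU1.contDiffAt (hDo.mem_nhds hx)).differentiableAt (by norm_num)).hasGradientAt
  have hgc : ContinuousOn (gradient U) (Ω \ T) :=
    (InnerProductSpace.toDual ℝ (EuclideanSpace ℝ (Fin n))).symm.continuous.comp_continuousOn
      (hU1.continuousOn_fderiv_of_isOpen hDo le_rfl)
  have hbd : ∀ x ∈ Ω, ∃ C, ∀ a ∈ A, ‖f x a‖ ≤ C := by
    intro x hx
    apply hAc.exists_bound_of_continuousOn
    exact hfc.comp (f := fun a => (x, a)) (by fun_prop) (fun a ha => ⟨hx, ha⟩)
  let V : EuclideanSpace ℝ (Fin n) → ℝ := fun x => H x (gradient U x)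
  let F : EuclideanSpace ℝ (Fin n) → EuclideanSpace ℝ (Fin n) := fun x => -(Hp x (gradient U x))
  have hVc : ContinuousOn V (Ω \ T) :=
    (H_continuousOn Ω A f hbd L hLip H hH).comp (f := fun x => (x, gradient U x))
      (continuousOn_id.prodMk hgc) (fun x hx => ⟨hx.1, mem_univ _⟩)
  let O : Set (EuclideanSpace ℝ (Fin n)) := (Ω \ T) ∩ V ⁻¹' Ioi 0
  have hOo : IsOpen O := hVc.isOpen_inter_preimage hDo isOpen_Ioi
  have hOD : O ⊆ Ω \ T := inter_subset_left
  have hVO : ContinuousOn V O := hVc.mono hOD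
  have hFO : ContinuousOn F O :=
    (hHpc.comp (f := fun x => (x, gradient U x)) (continuousOn_id.prodMk (hgc.mono hOD))
      (fun x hx => hx.2)).neg
  have hFmem : ∀ x ∈ O, (∃ a ∈ A, f x a = F x) ∧ ⟪gradient U x, F x⟫ = -V x := fun x hx =>
    Hp_mem A f H hH x (gradient U x) _ (hHp x _ hx.2)
  have hvis : ∀ x ∈ O, ∀ y : EuclideanSpace ℝ (Fin n), ∀ l : ℝ, 0 < l →
      IsLocalMax (fun u => V u - ‖u - y‖ ^ 2 / (2 * l)) x → 0 ≤ ⟪F x, x - y⟫ := by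
    intro x hx y l hl hmax
    have hcd : ContDiff ℝ 1 (fun u : EuclideanSpace ℝ (Fin n) => ‖u - y‖ ^ 2 / (2 * l)) :=
      ((contDiff_id.sub contDiff_const).norm_sq ℝ).div_const _
    have h1 := hsub _ hcd x hx.1 hx.2 (hmax.on _)
    rw [gradient_quad, inner_smul_right] at h1
    have h2 : 0 ≤ (1 / l) * ⟪F x, x - y⟫ := by linarith
    exact nonneg_of_mul_nonneg_right h2 (by positivity)
  have hx₀O : x₀ ∈ O := ⟨⟨hx₀, hx₀T⟩, hV₀⟩
  -- decrease of U along solutions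
  have hdec : ∀ b x, IsSol O V F x₀ b x →
      AntitoneOn (fun t => U (x t) + V x₀ * t) (Ico 0 b) := by
    rintro b x ⟨hb, h0, hO, hd, hm⟩
    have hder : ∀ t ∈ Ico 0 b,
        HasDerivWithinAt (fun t => U (x t) + V x₀ * t) (-V (x t) + V x₀) (Ico 0 b) t := by
      intro t ht
      have h1 := (hasGradientAt_iff_hasFDerivAt.1 (hgrad (x t) (hO t ht).1)).comp_hasDerivWithinAt t
        (hd t ht)
      rw [InnerProductSpace.toDual_apply_apply, (hFmem _ (hO t ht)).2] at h1
      have h2 := ((hasDerivWithinAt_id t (Ico 0 b)).const_mul (V x₀))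
      rw [mul_one] at h2
      exact h1.add h2
    apply antitoneOn_of_hasDerivWithinAt_nonpos (convex_Ico 0 b)
      (fun t ht => (hder t ht).continuousWithinAt)
      (fun t ht => (hder t (interior_subset ht)).mono interior_subset)
    intro t ht
    have ht' := interior_subset ht
    have : V (x 0) ≤ V (x t) := hm ⟨le_rfl, hb⟩ ht' ht'.1
    rw [h0] at this
    linarith
  have hV₀' : 0 < V x₀ := hV₀
  have hB : ∀ b x, IsSol O V F x₀ b x → b ≤ U x₀ / V x₀ := by
    intro b x hs
    apply le_of_forall_lt_imp_le_of_dense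
    intro t ht
    rcases lt_or_ge t 0 with h | h
    · exact h.le.trans (div_nonneg (hU0 x₀ hx₀) hV₀.le)
    · rw [le_div_iff₀ hV₀']
      have h1 := hdec b x hs ⟨le_rfl, hs.1⟩ ⟨h, ht⟩ h
      simp only [hs.2.1] at h1
      have h2 := hU0 _ (hs.2.2.1 t ⟨h, ht⟩).1.1
      linarith
  obtain ⟨b, x, hsol, hmaxl⟩ := exists_maximal_sol O hOo V F hVO hFO hvis x₀ hx₀O _ hB
  have hb : 0 < b := hsol.1
  have hxd := hsol.2.2.2.1
  have hxO := hsol.2.2.1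
  -- growth bound
  obtain ⟨C0, hC0⟩ := hbd x₀ hx₀
  have hC00 : 0 ≤ C0 := by
    obtain ⟨a, ha⟩ := hA
    exact (norm_nonneg _).trans (hC0 a ha)
  have hgrow : ∀ t ∈ Ico 0 b, ‖F (x t)‖ ≤ (max L 0) * ‖x t - x₀‖ + C0 := by
    intro t ht
    obtain ⟨a, ha, h⟩ := (hFmem _ (hxO t ht)).1
    rw [← h]
    have h1 : f (x t) a = (f (x t) a - f x₀ a) + f x₀ a := by abel
    rw [h1]
    refine (norm_add_le _ _).trans (add_le_add ?_ (hC0 a ha))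
    exact (hLip a ha _ (hxO t ht).1.1 _ hx₀).trans
      (mul_le_mul_of_nonneg_right (le_max_left _ _) (norm_nonneg _))
  have hxR : ∀ t ∈ Ico 0 b, ‖x t - x₀‖ ≤ gronwallBound 0 (max L 0) C0 b := by
    intro t ht
    have h1 := norm_le_gronwallBound_of_norm_deriv_right_le (f := fun s => x s - x₀)
      (f' := fun s => F (x s)) (δ := 0) (K := max L 0) (ε := C0) (a := 0) (b := t)
      (fun s hs => (((hxd s ⟨hs.1, hs.2.trans_lt ht.2⟩).continuousWithinAt).mono
        (fun τ hτ => ⟨hτ.1, hτ.2.trans_lt ht.2⟩)).sub continuousWithinAt_const)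
      (fun s hs => ((hxd s ⟨hs.1, hs.2.trans ht.2⟩).mono_of_mem_nhdsWithin (by
        filter_upwards [self_mem_nhdsWithin,
          nhdsWithin_le_nhds (Iio_mem_nhds (hs.2.trans ht.2))] with τ h3 h4
        exact ⟨hs.1.trans h3, h4⟩)).sub_const x₀)
      (by simp [hsol.2.1]) (fun s hs => hgrow s ⟨hs.1, hs.2.trans ht.2⟩) t ⟨ht.1, le_rfl⟩
    refine h1.trans ?_
    apply gronwallBound_mono le_rfl hC00 (le_max_right _ _)
    linarith [ht.2]
  obtain ⟨C1, hC1⟩ : ∃ C1 : NNReal, ∀ t ∈ Ico 0 b, ‖F (x t)‖ ≤ C1 := by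
    refine ⟨Real.toNNReal ((max L 0) * gronwallBound 0 (max L 0) C0 b + C0), fun t ht => ?_⟩
    refine le_trans ?_ (Real.le_coe_toNNReal _)
    have := mul_le_mul_of_nonneg_left (hxR t ht) (le_max_right L 0)
    linarith [hgrow t ht]
  have hLx : LipschitzOnWith C1 x (Ico 0 b) :=
    (convex_Ico 0 b).lipschitzOnWith_of_nnnorm_hasDerivWithin_le hxd (fun t ht => hC1 t ht)
  obtain ⟨g, hgL, hxg⟩ := hLx.extend_finite_dimension
  have hgcont : Continuous g := hgL.continuous
  have hgsol : IsSol O V F x₀ b g := by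
    refine ⟨hb, ?_, ?_, ?_, ?_⟩
    · rw [← hxg ⟨le_rfl, hb⟩]; exact hsol.2.1
    · intro t ht; rw [← hxg ht]; exact hxO t ht
    · intro t ht
      rw [← hxg ht]
      exact (hxd t ht).congr (fun τ hτ => (hxg hτ).symm) (hxg ht).symm
    · intro t1 h1 t2 h2 h12
      show V (g t1) ≤ V (g t2)
      rw [← hxg h1, ← hxg h2]
      exact hsol.2.2.2.2 h1 h2 h12
  have hIoo : Ioo 0 b ∈ nhdsWithin b (Iio b) := Ioo_mem_nhdsLT hb
  have hglim : Filter.Tendsto g (nhdsWithin b (Iio b)) (nhds (g b)) :=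
    (hgcont.tendsto b).mono_left nhdsWithin_le_nhds
  have hxlim : Filter.Tendsto x (nhdsWithin b (Iio b)) (nhds (g b)) := by
    apply hglim.congr'
    filter_upwards [hIoo] with t ht using (hxg ⟨ht.1.le, ht.2⟩).symm
  obtain ⟨-, hg0, hgO, hgd, hgm⟩ := hgsol
  have hdg := hdec b g ⟨hb, hg0, hgO, hgd, hgm⟩
  have hD : ∀ᶠ t in nhdsWithin b (Iio b), g t ∈ Ω \ T := by
    filter_upwards [hIoo] with t ht using (hgO t ⟨ht.1.le, ht.2⟩).1
  have hzcl : g b ∈ closure (Ω \ T) := mem_closure_of_tendsto hglim hD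
  have hUlim : Filter.Tendsto (fun t => U (g t)) (nhdsWithin b (Iio b)) (nhds (U (g b))) := by
    refine (hUc (g b) hzcl).tendsto.comp (tendsto_nhdsWithin_iff.2 ⟨hglim, ?_⟩)
    exact hD.mono fun t ht => subset_closure ht
  have hUle : ∀ t ∈ Ico 0 b, U (g t) ≤ U x₀ := by
    intro t ht
    have h1 := hdg ⟨le_rfl, hb⟩ ht ht.1
    simp only [hg0] at h1
    have h2 := mul_nonneg hV₀'.le ht.1
    linarith
  have hUz : U (g b) < M := by
    refine lt_of_le_of_lt ?_ (hUΩ x₀ ⟨hx₀, hx₀T⟩).2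
    apply le_of_tendsto hUlim
    filter_upwards [hIoo] with t ht using hUle t ⟨ht.1.le, ht.2⟩
  have hzcΩ : g b ∈ closure Ω := closure_mono diff_subset hzcl
  have hzΩ : g b ∈ Ω := by
    by_contra h
    have : g b ∈ frontier Ω := ⟨hzcΩ, fun h' => h (interior_subset h')⟩
    exact absurd (hUfr _ this) hUz.ne
  have hzT : g b ∈ T := by
    by_contra h
    have hz : g b ∈ Ω \ T := ⟨hzΩ, h⟩
    have hVlim : Filter.Tendsto (fun t => V (g t)) (nhdsWithin b (Iio b)) (nhds (V (g b))) :=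
      (hVc.continuousAt (hDo.mem_nhds hz)).tendsto.comp hglim
    have : V x₀ ≤ V (g b) := by
      apply ge_of_tendsto hVlim
      filter_upwards [hIoo] with t ht
      have := hgm ⟨le_rfl, hb⟩ ⟨ht.1.le, ht.2⟩ ht.1.le
      simpa only [hg0] using this
    exact hmaxl (g b) ⟨hz, hV₀'.trans_le this⟩ hxlim
  have hbB : b ≤ U x₀ / H x₀ (gradient U x₀) := hB b g ⟨hb, hg0, hgO, hgd, hgm⟩
  -- the target can be reached
  obtain ⟨a0, ha0, hfa0⟩ : ∃ a0 ∈ A, f (g b) a0 = 0 := by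
    obtain ⟨a, ha⟩ := hA
    obtain ⟨a', ha', h⟩ := hsymm (g b) hzΩ a ha
    have := hconv (g b) hzΩ ⟨a, ha, rfl⟩ ⟨a', ha', rfl⟩ (by norm_num : (0:ℝ) ≤ 1 / 2)
      (by norm_num : (0:ℝ) ≤ 1 / 2) (by norm_num)
    rw [h, smul_neg, add_neg_cancel] at this
    exact this
  have hreach : b ∈ reachTimes Ω T A f x₀ := by
    refine ⟨hb.le, fun t => g (min t b), ?_, ?_, ?_⟩
    · rw [← hg0]
      refine adm_of_sol Ω A hAc f hfc b hb g (fun t => F (g t)) hgcont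
        (fun t ht => (hgO t ht).1.1) hgd (hFO.comp hgcont.continuousOn hgO) C1 ?_
        (fun t ht => (hFmem _ (hgO t ht)).1) a0 ha0 hfa0
      intro t ht
      rw [← hxg ht]
      exact hC1 t ht
    · intro s hs
      show g (min s b) ∈ Ω
      rw [min_eq_left hs.2]
      rcases hs.2.lt_or_eq with h | h
      · exact (hgO s ⟨hs.1, h⟩).1.1
      · rw [h]; exact hzΩ
    · show g (min b b) ∈ T
      rwa [min_self]
  refine ⟨b, hb.le, hbB, g, hg0, fun t ht => (hgO t ht).1, ?_, hgd, hgm, ?_, hzT, ⟨b, hreach⟩, ?_⟩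
  · intro t ht
    rcases ht.2.lt_or_eq with h | h
    · exact subset_closure (hgO t ⟨ht.1, h⟩).1.1
    · rw [h]; exact hzcΩ
  · intro t1 h1 t2 h2 h12
    show U (g t2) < U (g t1)
    have h1' : t1 ∈ Ico 0 b := ⟨h1.1, h12.trans_le h2.2⟩
    rcases h2.2.lt_or_eq with h | h
    · have h3 := hdg h1' ⟨h2.1, h⟩ h12.le
      simp only at h3
      have h4 := mul_lt_mul_of_pos_left h12 hV₀'
      linarith
    · rw [h, hUT _ hzT]
      exact (hUΩ _ (hgO t1 h1').1).1
  · exact (csInf_le ⟨0, fun t ht => ht.1⟩ hreach).trans hbB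
end

section
/- In addition to the hypotheses guaranteeing finite-time controllability outside the singular set (Ω open, 𝒯 ⊆ Ω closed, H(x,p) = max_{a∈A}(−f(x,a)·p) from a symmetric convex-valued compact-controlled system, U a nonnegative C¹-supersolution of the Aronsson equation on Ω∖(𝒯∩ℋ) with U = 0 on 𝒯, U = M on ∂Ω, 0 < U < M on Ω∖𝒯, and the decay condition of the regularity theorem), assume moreover that the singular set ℋ ∩ (Ω∖𝒯), where ℋ = {x : H(x,∇U(x)) = 0}, is an embedded C¹ submanifold of ℝⁿ of dimension at most n−1, and that for every x₀ ∈ ℋ ∩ (Ω∖𝒯) there exists a ∈ A with f(x₀,a) not belonging to the tangent space T_{x₀}ℋ. Then for every x₀ ∈ Ω∖𝒯 there exist a measurable control and a finite time t ≥ 0 such that the corresponding admissible trajectory from x₀ reaches 𝒯 at time t. -/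
open Set MeasureTheory
open scoped RealInnerProductSpace

/-- Sum estimate for an Euler scheme. -/
theorem aux_euler_sum {E : Type*} [NormedAddCommGroup E] [InnerProductSpace ℝ E]
    (h ε : ℝ) (hh : 0 ≤ h) (G : E → E) (Y : ℕ → E) (hY : ∀ i, Y (i + 1) = Y i + h • G (Y i))
    (v : E) (i N : ℕ) (hG : ∀ l < N, ‖G (Y (i + l)) - v‖ ≤ ε) :
    ‖Y (i + N) - Y i - ((N : ℝ) * h) • v‖ ≤ (N : ℝ) * h * ε := by
  induction N with
  | zero => simp
  | succ N ih =>
    have h1 := ih (fun l hl => hG l (by omega))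
    have h2 := hG N (by omega)
    have h3 : Y (i + (N + 1)) - Y i - (((N + 1 : ℕ) : ℝ) * h) • v
        = (Y (i + N) - Y i - ((N : ℝ) * h) • v) + h • (G (Y (i + N)) - v) := by
      rw [← add_assoc, hY]; push_cast; module
    rw [h3]
    refine (norm_add_le _ _).trans ?_
    rw [norm_smul, Real.norm_of_nonneg hh]
    push_cast
    nlinarith [mul_le_mul_of_nonneg_left h2 hh]

/-- Floor estimate. -/
theorem aux_floor (h t t' : ℝ) (hh : 0 < h) (ht : 0 ≤ t) (htt : t ≤ t') :
    ∃ N : ℕ, ⌊t' / h⌋₊ = ⌊t / h⌋₊ + N ∧ |(N : ℝ) * h - (t' - t)| ≤ h := by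
  have hle : ⌊t / h⌋₊ ≤ ⌊t' / h⌋₊ := Nat.floor_le_floor (by gcongr)
  obtain ⟨N, hN⟩ := Nat.exists_eq_add_of_le hle
  refine ⟨N, hN, ?_⟩
  have a1 := Nat.floor_le (div_nonneg ht hh.le)
  have a2 := Nat.lt_floor_add_one (t / h)
  have a3 := Nat.floor_le (div_nonneg (ht.trans htt) hh.le)
  have a4 := Nat.lt_floor_add_one (t' / h)
  rw [hN] at a3 a4
  push_cast at a3 a4
  have e1 : t / h * h = t := div_mul_cancel₀ _ hh.ne'
  have e2 : t' / h * h = t' := div_mul_cancel₀ _ hh.ne'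
  have b1 := mul_le_mul_of_nonneg_right a1 hh.le
  have b2 := mul_lt_mul_of_pos_right a2 hh
  have b3 := mul_le_mul_of_nonneg_right a3 hh.le
  have b4 := mul_lt_mul_of_pos_right a4 hh
  rw [abs_le]
  constructor <;> nlinarith

/-- One step of the proximal Euler scheme. -/
theorem aux_step {E : Type*} [NormedAddCommGroup E] [InnerProductSpace ℝ E]
    (V : E → ℝ) (r h C : ℝ) (hr : 0 < r) (hh : 0 ≤ h) (hhr : h * C ≤ r / 4)
    (y s v : E) (hv : ‖v‖ ≤ C) (hs : ‖s - y‖ ^ 2 / r ^ 2 < 1 / 2)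
    (hin : 0 ≤ ⟪v, s - y⟫) :
    s ∈ Metric.closedBall (y + h • v) r ∧
      V s - ‖s - y‖ ^ 2 / r ^ 2 - h ^ 2 * C ^ 2 / r ^ 2 ≤ V s - ‖s - (y + h • v)‖ ^ 2 / r ^ 2 := by
  have hr2 : 0 < r ^ 2 := by positivity
  rw [div_lt_iff₀ hr2] at hs
  have h1 : ‖s - y‖ ≤ 3 / 4 * r := by
    apply le_of_sq_le_sq _ (by positivity)
    nlinarith
  have hn : ‖h • v‖ ≤ h * C := by
    rw [norm_smul, Real.norm_of_nonneg hh]; gcongr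
  constructor
  · rw [Metric.mem_closedBall, dist_eq_norm]
    have : s - (y + h • v) = (s - y) - h • v := by abel
    rw [this]
    refine (norm_sub_le _ _).trans ?_
    linarith
  · have : s - (y + h • v) = (s - y) - h • v := by abel
    rw [this, norm_sub_sq_real (s - y) (h • v)]
    have h2 : ⟪s - y, h • v⟫ = h * ⟪v, s - y⟫ := by
      rw [inner_smul_right, real_inner_comm]
    rw [h2]
    have h3 : ‖h • v‖ ^ 2 ≤ h ^ 2 * C ^ 2 := by
      rw [← mul_pow]; gcongr
    have h4 : (‖s - y‖ ^ 2 - 2 * (h * ⟪v, s - y⟫) + ‖h • v‖ ^ 2) / r ^ 2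
        ≤ (‖s - y‖ ^ 2 + h ^ 2 * C ^ 2) / r ^ 2 := by
      gcongr
      nlinarith [mul_nonneg hh hin]
    rw [add_div (‖s - y‖ ^ 2) (h ^ 2 * C ^ 2)] at h4
    linarith

/-- Weak invariance (viability): existence of a solution of `dx = F x` along which `V` does not
decrease. -/
theorem aux_viability {E : Type*} [NormedAddCommGroup E] [InnerProductSpace ℝ E]
    [FiniteDimensional ℝ E] (P : Set E) (hP : IsOpen P) (x₀ : E) (F : E → E)
    (hF : ContinuousOn F P) (C : ℝ) (hC : 0 < C) (hFC : ∀ x ∈ P, ‖F x‖ ≤ C)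
    (V : E → ℝ) (hV : ContinuousOn V P)
    (hvis : ∀ s ∈ P, ∀ y : E, ∀ lam > (0 : ℝ),
      IsLocalMax (fun u => V u - ‖u - y‖ ^ 2 / lam) s → 0 ≤ ⟪F s, s - y⟫) :
    ∃ x : ℝ → E, x 0 = x₀ ∧ Continuous x ∧
      (∀ t, 0 ≤ t → x t ∈ P → HasDerivWithinAt x (F (x t)) (Ici t) t) ∧
      (∀ t, 0 ≤ t → (∀ s ∈ Icc 0 t, x s ∈ P) → V x₀ ≤ V (x t)) := by
  classical
  have : ProperSpace E := FiniteDimensional.proper_real E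
  let r : ℕ → ℝ := fun k => 1 / ((k : ℝ) + 1)
  have hr : ∀ k, 0 < r k := fun k => Nat.one_div_pos_of_nat
  have hr1 : ∀ k, r k ≤ 1 := by
    intro k
    simp only [r]
    rw [div_le_one (by positivity)]
    have : (0 : ℝ) ≤ k := by positivity
    linarith
  have hrt : Filter.Tendsto r Filter.atTop (nhds 0) := tendsto_one_div_add_atTop_nhds_zero_nat
  let h : ℕ → ℝ := fun k => r k ^ 3
  have hh : ∀ k, 0 < h k := fun k => pow_pos (hr k) 3
  have hh1 : ∀ k, h k ≤ 1 := fun k => pow_le_one₀ (hr k).le (hr1 k)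
  have hht : Filter.Tendsto h Filter.atTop (nhds 0) := by
    simpa using hrt.pow 3
  have hex : ∀ k : ℕ, ∀ y : E, ∃ s : E, Metric.closedBall y (r k) ⊆ P →
      (s ∈ Metric.closedBall y (r k) ∧ ∀ u ∈ Metric.closedBall y (r k),
        V u - ‖u - y‖ ^ 2 / r k ^ 2 ≤ V s - ‖s - y‖ ^ 2 / r k ^ 2) := by
    intro k y
    by_cases hb : Metric.closedBall y (r k) ⊆ P
    · have hc : ContinuousOn (fun u => V u - ‖u - y‖ ^ 2 / r k ^ 2)
          (Metric.closedBall y (r k)) := by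
        apply (hV.mono hb).sub
        fun_prop
      obtain ⟨s, hs, hmax⟩ := (isCompact_closedBall y (r k)).exists_isMaxOn
        ⟨y, Metric.mem_closedBall_self (hr k).le⟩ hc
      exact ⟨s, fun _ => ⟨hs, fun u hu => hmax hu⟩⟩
    · exact ⟨y, fun h => absurd h hb⟩
  choose s hs using hex
  let G : ℕ → E → E := fun k y => if Metric.closedBall y (r k) ⊆ P then F (s k y) else 0
  have hGC : ∀ k y, ‖G k y‖ ≤ C := by
    intro k y
    by_cases hb : Metric.closedBall y (r k) ⊆ P
    · simp only [G, if_pos hb]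
      exact hFC _ (hb (hs k y hb).1)
    · simp only [G, if_neg hb, norm_zero]; exact hC.le
  let Y : ℕ → ℕ → E := fun k i => Nat.rec x₀ (fun _ y => y + h k • G k y) i
  have hY0 : ∀ k, Y k 0 = x₀ := fun k => rfl
  have hYs : ∀ k i, Y k (i + 1) = Y k i + h k • G k (Y k i) := fun k i => rfl
  have hYC : ∀ k i N, ‖Y k (i + N) - Y k i‖ ≤ (N : ℝ) * h k * C := by
    intro k i N
    have := aux_euler_sum (h k) C (hh k).le (G k) (Y k) (hYs k) 0 i N
      (fun l _ => by simpa using hGC k _)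
    simpa using this
  let Z : ℕ → ℝ → E := fun k t => Y k ⌊t / h k⌋₊
  have hZ : ∀ k t t', 0 ≤ t → t ≤ t' → ‖Z k t' - Z k t‖ ≤ (t' - t + h k) * C := by
    intro k t t' ht htt
    obtain ⟨N, hN, hN2⟩ := aux_floor (h k) t t' (hh k) ht htt
    simp only [Z, hN]
    refine (hYC k _ N).trans ?_
    rw [abs_le] at hN2
    gcongr
    linarith
  have hZ0 : ∀ k, Z k 0 = x₀ := by intro k; simp [Z, hY0]
  let 𝒰 : Ultrafilter ℕ := Filter.hyperfilter ℕ
  have h𝒰 : (𝒰 : Filter ℕ) ≤ Filter.atTop := by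
    rw [← Nat.cofinite_eq_atTop]; exact Filter.hyperfilter_le_cofinite
  have hlim : ∀ t : ℝ, ∃ x : E, 0 ≤ t → Filter.Tendsto (fun k => Z k t) 𝒰 (nhds x) := by
    intro t
    by_cases ht : 0 ≤ t
    · have hmem : ∀ k, Z k t ∈ Metric.closedBall x₀ ((t + 1) * C) := by
        intro k
        rw [Metric.mem_closedBall, dist_eq_norm]
        have := hZ k 0 t le_rfl ht
        rw [hZ0] at this
        refine this.trans ?_
        have := hh1 k
        gcongr
        linarith
      obtain ⟨x, _, hx⟩ := (isCompact_closedBall x₀ ((t + 1) * C)).ultrafilter_le_nhds'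
        (𝒰.map (fun k => Z k t)) (by
          rw [Ultrafilter.mem_map]
          exact Filter.univ_mem' hmem)
      exact ⟨x, fun _ => hx⟩
    · exact ⟨x₀, fun h => absurd h ht⟩
  choose x' hx' using hlim
  -- make it constant for negative times
  let x : ℝ → E := fun t => x' (max t 0)
  have hxe : ∀ t, 0 ≤ t → x t = x' t := by
    intro t ht; simp [x, max_eq_left ht]
  have hx : ∀ t, 0 ≤ t → Filter.Tendsto (fun k => Z k t) 𝒰 (nhds (x t)) := by
    intro t ht
    rw [hxe t ht]; exact hx' t ht
  have hr𝒰 : Filter.Tendsto r 𝒰 (nhds 0) := hrt.mono_left h𝒰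
  have hh𝒰 : Filter.Tendsto h 𝒰 (nhds 0) := hht.mono_left h𝒰
  have hxL : ∀ t t', 0 ≤ t → t ≤ t' → ‖x t' - x t‖ ≤ (t' - t) * C := by
    intro t t' ht htt
    have h1 := ((hx t' (ht.trans htt)).sub (hx t ht)).norm
    have h2 : Filter.Tendsto (fun k => (t' - t + h k) * C) 𝒰 (nhds ((t' - t + 0) * C)) :=
      (tendsto_const_nhds.add hh𝒰).mul_const C
    rw [add_zero] at h2
    exact le_of_tendsto_of_tendsto' h1 h2 (fun k => hZ k t t' ht htt)
  have hx0 : x 0 = x₀ := by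
    have h1 := hx 0 le_rfl
    simp only [hZ0] at h1
    exact tendsto_nhds_unique h1 tendsto_const_nhds
  have hxc : Continuous x := by
    have hxL2 : LipschitzOnWith ⟨C, hC.le⟩ x (Ici 0) := by
      apply LipschitzOnWith.of_dist_le_mul
      intro t ht t' ht'
      rw [dist_eq_norm, Real.dist_eq]
      change ‖x t - x t'‖ ≤ C * |t - t'|
      rcases le_total t t' with hle | hle
      · rw [norm_sub_rev, abs_sub_comm, abs_of_nonneg (sub_nonneg.2 hle), mul_comm]
        exact hxL t t' ht hle
      · rw [abs_of_nonneg (sub_nonneg.2 hle), mul_comm]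
        exact hxL t' t ht' hle
    have : x = fun t => x (max t 0) := by
      funext t; simp [x]
    rw [this]
    exact hxL2.continuousOn.comp_continuous (by fun_prop) (fun t => le_max_right t 0)
  -- the local core
  have core : ∀ t₀, 0 ≤ t₀ → x t₀ ∈ P → ∀ ε > 0, ∃ δ > 0, ∀ t', t₀ ≤ t' → t' ≤ t₀ + δ →
      ‖x t' - x t₀ - (t' - t₀) • F (x t₀)‖ ≤ ε * (t' - t₀) ∧ V (x t₀) ≤ V (x t') := by
    intro t₀ ht₀ hz ε hε
    set z := x t₀ with hzdef
    have hFz := hF.continuousAt (hP.mem_nhds hz)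
    have hVz := hV.continuousAt (hP.mem_nhds hz)
    have hev : ∀ᶠ u in nhds z, u ∈ P ∧ ‖F u - F z‖ ≤ ε ∧ |V u - V z| < 1 / 4 := by
      have e1 := hP.mem_nhds hz
      have e2 := Metric.tendsto_nhds.1 hFz ε hε
      have e3 := Metric.tendsto_nhds.1 hVz (1 / 4) (by norm_num)
      filter_upwards [e1, e2, e3] with u h1 h2 h3
      rw [dist_eq_norm] at h2
      rw [Real.dist_eq] at h3
      exact ⟨h1, h2.le, h3⟩
    obtain ⟨η', hη', hball⟩ := Metric.eventually_nhds_iff_ball.1 hev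
    obtain ⟨η, hη, hηeq⟩ : ∃ η > 0, η' = 5 * η := ⟨η' / 5, by positivity, by ring⟩
    have hB : ∀ u, ‖u - z‖ ≤ 4 * η → u ∈ P ∧ ‖F u - F z‖ ≤ ε ∧ |V u - V z| < 1 / 4 := by
      intro u hu
      apply hball
      rw [Metric.mem_ball, dist_eq_norm]; linarith
    refine ⟨η / C, by positivity, ?_⟩
    intro t' htt' ht'δ
    have ht'0 : 0 ≤ t' := ht₀.trans htt'
    -- eventual conditions on k
    have ev : ∀ᶠ k in (𝒰 : Filter ℕ), ‖Z k t₀ - z‖ < η ∧ r k < η ∧ h k < η / C ∧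
        r k < 1 / (4 * C) := by
      have e1 := Metric.tendsto_nhds.1 (hx t₀ ht₀) η hη
      have e2 := hr𝒰.eventually (gt_mem_nhds hη)
      have e3 := hh𝒰.eventually (gt_mem_nhds (show 0 < η / C by positivity))
      have e4 := hr𝒰.eventually (gt_mem_nhds (show 0 < 1 / (4 * C) by positivity))
      filter_upwards [e1, e2, e3, e4] with k h1 h2 h3 h4
      rw [dist_eq_norm] at h1
      exact ⟨h1, h2, h3, h4⟩
    -- choose step counts
    have hNex : ∀ k, ∃ N : ℕ, ⌊t' / h k⌋₊ = ⌊t₀ / h k⌋₊ + N ∧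
        |(N : ℝ) * h k - (t' - t₀)| ≤ h k := fun k => aux_floor (h k) t₀ t' (hh k) ht₀ htt'
    choose N hN hN2 using hNex
    have hNt : Filter.Tendsto (fun k => (N k : ℝ) * h k) 𝒰 (nhds (t' - t₀)) := by
      rw [tendsto_iff_dist_tendsto_zero]
      refine squeeze_zero (fun _ => dist_nonneg) (fun k => ?_) hh𝒰
      rw [Real.dist_eq]; exact hN2 k
    have close : ∀ᶠ k in (𝒰 : Filter ℕ), ∀ l ≤ N k, ‖Y k (⌊t₀ / h k⌋₊ + l) - z‖ ≤ 3 * η := by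
      filter_upwards [ev] with k hk l hl
      have h1 := hYC k ⌊t₀ / h k⌋₊ l
      have h2 : Y k (⌊t₀ / h k⌋₊ + l) - z
          = (Y k (⌊t₀ / h k⌋₊ + l) - Y k ⌊t₀ / h k⌋₊) + (Z k t₀ - z) := by
        simp [Z]
      rw [h2]
      refine (norm_add_le _ _).trans ?_
      have h3 : (l : ℝ) * h k * C ≤ 2 * η := by
        have a1 : (l : ℝ) * h k ≤ N k * h k := by
          have : (l : ℝ) ≤ N k := by exact_mod_cast hl
          exact mul_le_mul_of_nonneg_right this (hh k).le
        have a2 := (abs_le.1 (hN2 k)).2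
        have a3 : (l : ℝ) * h k ≤ 2 * (η / C) := by linarith [hk.2.2.1]
        calc (l : ℝ) * h k * C ≤ 2 * (η / C) * C := by gcongr
          _ = 2 * η := by field_simp
      linarith [hk.1]
    -- good points
    have good : ∀ᶠ k in (𝒰 : Filter ℕ), ∀ y, ‖y - z‖ ≤ 3 * η →
        Metric.closedBall y (r k) ⊆ P ∧ ‖s k y - z‖ ≤ 4 * η ∧ ‖s k y - y‖ ≤ r k := by
      filter_upwards [ev] with k hk y hy
      have hsub : ∀ u ∈ Metric.closedBall y (r k), ‖u - z‖ ≤ 4 * η := by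
        intro u hu
        rw [Metric.mem_closedBall, dist_eq_norm] at hu
        have : u - z = (u - y) + (y - z) := by abel
        rw [this]
        refine (norm_add_le _ _).trans ?_
        linarith [hk.2.1]
      have hbP : Metric.closedBall y (r k) ⊆ P := fun u hu => (hB u (hsub u hu)).1
      have h1 := (hs k y hbP).1
      refine ⟨hbP, hsub _ h1, ?_⟩
      rwa [Metric.mem_closedBall, dist_eq_norm] at h1
    constructor
    · have hk1 : ∀ᶠ k in (𝒰 : Filter ℕ),
          ‖Z k t' - Z k t₀ - ((N k : ℝ) * h k) • F z‖ ≤ (N k : ℝ) * h k * ε := by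
        filter_upwards [close, good] with k hc hg
        simp only [Z, hN k]
        apply aux_euler_sum (h k) ε (hh k).le (G k) (Y k) (hYs k)
        intro l hl
        obtain ⟨g1, g2, g3⟩ := hg _ (hc l hl.le)
        simp only [G, if_pos g1]
        exact (hB _ g2).2.1
      have l1 := (((hx t' ht'0).sub (hx t₀ ht₀)).sub (hNt.smul_const (F z))).norm
      have l2 := hNt.mul_const ε
      have := le_of_tendsto_of_tendsto l1 l2 hk1
      rw [mul_comm ε]
      exact this
    · let W : ℕ → E → ℝ := fun k y => V (s k y) - ‖s k y - y‖ ^ 2 / r k ^ 2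
      have hstep : ∀ᶠ k in (𝒰 : Filter ℕ), ∀ y, ‖y - z‖ ≤ 3 * η →
          ‖y + h k • G k y - z‖ ≤ 3 * η →
          W k y - h k * (r k * C ^ 2) ≤ W k (y + h k • G k y) := by
        filter_upwards [good, ev] with k hg hk y hy hy'
        obtain ⟨g1, g2, g3⟩ := hg y hy
        obtain ⟨g1', g2', g3'⟩ := hg _ hy'
        have hmax := (hs k y g1).2
        have hrk := hr k
        have hlt : ‖s k y - y‖ ^ 2 / r k ^ 2 < 1 / 2 := by
          have h1 := hmax y (Metric.mem_closedBall_self hrk.le)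
          simp only [sub_self, norm_zero] at h1
          have h2 := abs_lt.1 (hB _ g2).2.2
          have h3 := abs_lt.1 (hB y (by linarith)).2.2
          norm_num at h1
          linarith [h2.2, h3.1]
        have hsP : s k y ∈ P := (hB _ g2).1
        have hloc : IsLocalMax (fun u => V u - ‖u - y‖ ^ 2 / r k ^ 2) (s k y) := by
          have hin : s k y ∈ Metric.ball y (r k) := by
            rw [Metric.mem_ball, dist_eq_norm]
            rw [div_lt_iff₀ (by positivity)] at hlt
            apply lt_of_pow_lt_pow_left₀ 2 hrk.le
            nlinarith [pow_pos hrk 2]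
          filter_upwards [Metric.isOpen_ball.mem_nhds hin] with u hu
          exact hmax u (Metric.ball_subset_closedBall hu)
        have hinn := hvis _ hsP y (r k ^ 2) (by positivity) hloc
        have hGeq : G k y = F (s k y) := by simp only [G, if_pos g1]
        have hhr : h k * C ≤ r k / 4 := by
          have a1 : r k * C ≤ 1 / 4 := by
            have := hk.2.2.2.le
            calc r k * C ≤ 1 / (4 * C) * C := by gcongr
              _ = 1 / 4 := by field_simp
          have a2 : r k * (r k * C) ≤ 1 * (1 / 4) := by
            have := hr1 k
            gcongr
          calc h k * C = r k * (r k * (r k * C)) := by simp only [h]; ring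
            _ ≤ r k * (1 * (1 / 4)) := by gcongr
            _ = r k / 4 := by ring
        obtain ⟨q1, q2⟩ := aux_step V (r k) (h k) C hrk (hh k).le hhr y (s k y) (F (s k y))
          (hFC _ hsP) hlt hinn
        rw [← hGeq] at q1 q2
        have q3 := (hs k _ g1').2 _ q1
        have q4 : h k ^ 2 * C ^ 2 / r k ^ 2 = h k * (r k * C ^ 2) := by
          simp only [h]; field_simp
        rw [q4] at q2
        exact q2.trans q3
      have hiter : ∀ᶠ k in (𝒰 : Filter ℕ),
          W k (Z k t₀) - (N k : ℝ) * h k * (r k * C ^ 2) ≤ W k (Z k t') := by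
        filter_upwards [hstep, close] with k hk hc
        have : ∀ l ≤ N k, W k (Y k ⌊t₀ / h k⌋₊) - (l : ℝ) * h k * (r k * C ^ 2)
            ≤ W k (Y k (⌊t₀ / h k⌋₊ + l)) := by
          intro l
          induction l with
          | zero => intro _; simp
          | succ l ih =>
            intro hl
            have i1 := ih (by omega)
            have i2 := hk _ (hc l (by omega)) (by
              rw [← hYs]; exact hc (l + 1) hl)
            rw [← hYs, add_assoc] at i2
            push_cast
            linarith
        have := this (N k) le_rfl
        simp only [Z, hN k]
        exact this
      have hcl0 : ∀ᶠ k in (𝒰 : Filter ℕ), ‖Z k t₀ - z‖ ≤ 3 * η := by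
        filter_upwards [close] with k hc
        exact hc 0 (Nat.zero_le _)
      have hcl1 : ∀ᶠ k in (𝒰 : Filter ℕ), ‖Z k t' - z‖ ≤ 3 * η := by
        filter_upwards [close] with k hc
        simp only [Z, hN k]
        exact hc _ le_rfl
      have hlow : ∀ᶠ k in (𝒰 : Filter ℕ), V (Z k t₀) ≤ W k (Z k t₀) := by
        filter_upwards [good, hcl0] with k hg hc
        have h1 := (hs k _ (hg _ hc).1).2 (Z k t₀) (Metric.mem_closedBall_self (hr k).le)
        simpa using h1
      have hup : ∀ k, W k (Z k t') ≤ V (s k (Z k t')) := by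
        intro k
        have : 0 ≤ ‖s k (Z k t') - Z k t'‖ ^ 2 / r k ^ 2 := by positivity
        simp only [W]; linarith
      have hst : Filter.Tendsto (fun k => s k (Z k t')) 𝒰 (nhds (x t')) := by
        have d : Filter.Tendsto (fun k => s k (Z k t') - Z k t') 𝒰 (nhds 0) := by
          apply squeeze_zero_norm' _ hr𝒰
          filter_upwards [good, hcl1] with k hg hc
          exact (hg _ hc).2.2
        simpa using d.add (hx t' ht'0)
      have hxt'P : x t' ∈ P := by
        have : ‖x t' - z‖ ≤ 3 * η :=
          le_of_tendsto ((hx t' ht'0).sub_const z).norm hcl1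
        exact (hB _ (by linarith)).1
      have hVt' := hV.continuousAt (hP.mem_nhds hxt'P)
      have L1 : Filter.Tendsto (fun k => V (Z k t₀) - (N k : ℝ) * h k * (r k * C ^ 2)) 𝒰
          (nhds (V z - (t' - t₀) * (0 * C ^ 2))) :=
        (hVz.tendsto.comp (hx t₀ ht₀)).sub (hNt.mul (hr𝒰.mul_const _))
      have L2 : Filter.Tendsto (fun k => V (s k (Z k t'))) 𝒰 (nhds (V (x t'))) :=
        hVt'.tendsto.comp hst
      have := le_of_tendsto_of_tendsto L1 L2 (by
        filter_upwards [hlow, hiter] with k a b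
        linarith [hup k])
      simpa using this
  refine ⟨x, hx0, hxc, ?_, ?_⟩
  · intro t ht hxt
    rw [hasDerivWithinAt_iff_isLittleO, Asymptotics.isLittleO_iff]
    intro ε hε
    obtain ⟨δ, hδ, H⟩ := core t ht hxt ε hε
    have : Iic (t + δ) ∈ nhds t := Iic_mem_nhds (by linarith)
    filter_upwards [self_mem_nhdsWithin, mem_nhdsWithin_of_mem_nhds this] with t' h1 h2
    have h3 := (H t' h1 h2).1
    rw [Real.norm_of_nonneg (sub_nonneg.2 h1)]
    exact h3
  · intro t ht hxP
    have hclosed : IsClosed ({u | V x₀ ≤ V (x u)} ∩ Icc 0 t) := by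
      have hc : ContinuousOn (fun u => V (x u)) (Icc 0 t) :=
        hV.comp hxc.continuousOn hxP
      have := hc.preimage_isClosed_of_isClosed isClosed_Icc (isClosed_Ici (a := V x₀))
      rw [inter_comm]
      exact this
    have := hclosed.Icc_subset_of_forall_exists_gt (by simp [hx0]) (by
      rintro u ⟨hu, hut⟩ w hw
      obtain ⟨δ, hδ, H⟩ := core u hut.1 (hxP u ⟨hut.1, hut.2.le⟩) 1 one_pos
      refine ⟨min w (u + δ), ?_, ?_, min_le_left _ _⟩
      · have hle : u ≤ min w (u + δ) := le_min (le_of_lt hw) (by linarith)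
        exact hu.trans (H _ hle (min_le_right _ _)).2
      · exact lt_min hw (by linarith))
    exact this ⟨ht, le_rfl⟩

/-- A measurable selection theorem for compact-valued maps. -/
theorem aux_selection {X : Type*} [MetricSpace X] [MeasurableSpace X] [BorelSpace X]
    (A : Set X) (hA : A.Nonempty) (hAc : IsCompact A)
    (I : Set ℝ) (hI : MeasurableSet I) (Γ : ℝ → Set X)
    (hne : ∀ t ∈ I, (Γ t ∩ A).Nonempty) (hcl : ∀ t ∈ I, IsClosed (Γ t ∩ A))
    (hmeas : ∀ B ⊆ A, IsCompact B → MeasurableSet {t | t ∈ I ∧ (Γ t ∩ B).Nonempty}) :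
    ∃ a : ℝ → X, Measurable a ∧ (∀ t, a t ∈ A) ∧ ∀ t ∈ I, a t ∈ Γ t := by
  classical
  have : Nonempty A := hA.to_subtype
  have : CompactSpace A := isCompact_iff_compactSpace.1 hAc
  obtain ⟨g0, hg0c, hg0s⟩ := exists_nat_bool_continuous_surjective_of_compact A
  let g : cantorSet → A := fun c => g0 (cantorSetHomeomorphNatToBool c)
  have hgc : Continuous g := hg0c.comp cantorSetHomeomorphNatToBool.continuous
  have hgs : Function.Surjective g := hg0s.comp cantorSetHomeomorphNatToBool.surjective
  have : CompactSpace cantorSet := isCompact_iff_compactSpace.1 isCompact_cantorSet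
  let S : ℝ → Set ℝ := fun t => Subtype.val '' {c : cantorSet | (g c : X) ∈ Γ t ∩ A}
  have hScomp : ∀ t ∈ I, IsCompact (S t) := by
    intro t ht
    have : IsClosed {c : cantorSet | (g c : X) ∈ Γ t ∩ A} :=
      (hcl t ht).preimage (continuous_subtype_val.comp hgc)
    exact this.isCompact.image continuous_subtype_val
  have hSne : ∀ t ∈ I, (S t).Nonempty := by
    intro t ht
    obtain ⟨x, hx, hxA⟩ := hne t ht
    obtain ⟨c, hc⟩ := hgs ⟨x, hxA⟩
    exact ⟨c, c, by simp [hc, hx], rfl⟩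
  let σ : ℝ → ℝ := fun t => if t ∈ I then sInf (S t) else 0
  have hσS : ∀ t ∈ I, σ t ∈ S t := by
    intro t ht
    simp only [σ, if_pos ht]
    exact (hScomp t ht).sInf_mem (hSne t ht)
  have hσC : ∀ t, σ t ∈ cantorSet := by
    intro t
    by_cases ht : t ∈ I
    · obtain ⟨c, _, hc⟩ := hσS t ht
      rw [← hc]; exact c.2
    · simp only [σ, if_neg ht]; exact zero_mem_cantorSet
  have hσm : Measurable σ := by
    apply measurable_of_Iic
    intro b
    let B : Set X := (fun c : cantorSet => (g c : X)) '' {c : cantorSet | (c : ℝ) ≤ b}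
    have hBc : IsCompact B := by
      apply IsCompact.image _ (continuous_subtype_val.comp hgc)
      exact (isClosed_le continuous_subtype_val continuous_const).isCompact
    have hBA : B ⊆ A := by
      rintro _ ⟨c, _, rfl⟩
      exact (g c).2
    have h1 := hmeas B hBA hBc
    have : σ ⁻¹' Iic b = {t | t ∈ I ∧ (Γ t ∩ B).Nonempty} ∪ (Iᶜ ∩ {_t | 0 ≤ b}) := by
      ext t
      by_cases ht : t ∈ I
      · simp only [mem_preimage, mem_Iic, mem_union, mem_ofPred_eq, ht, true_and, mem_inter_iff,
          mem_compl_iff, not_true_eq_false, false_and, or_false]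
        constructor
        · intro h
          obtain ⟨c, hc1, hc2⟩ := hσS t ht
          exact ⟨g c, hc1.1, c, by simpa [hc2] using h, rfl⟩
        · rintro ⟨x, hx, c, hc, rfl⟩
          have : σ t ≤ c := by
            simp only [σ, if_pos ht]
            exact csInf_le (hScomp t ht).bddBelow ⟨c, ⟨hx, (g c).2⟩, rfl⟩
          exact this.trans hc
      · simp [σ, ht]
    rw [this]
    exact h1.union (hI.compl.inter (MeasurableSet.const _))
  refine ⟨fun t => g ⟨σ t, hσC t⟩, ?_, fun t => (g _).2, ?_⟩
  · exact (continuous_subtype_val.comp hgc).measurable.comp (hσm.subtype_mk)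
  · intro t ht
    obtain ⟨c, hc1, hc2⟩ := hσS t ht
    have : (⟨σ t, hσC t⟩ : cantorSet) = c := Subtype.ext hc2.symm
    simp only [this]
    exact hc1.1

/-- Filippov-type selection. -/
theorem aux_filippov {n m : ℕ} (Ω : Set (EuclideanSpace ℝ (Fin n)))
    (A : Set (EuclideanSpace ℝ (Fin m))) (hA : A.Nonempty) (hAc : IsCompact A)
    (f : EuclideanSpace ℝ (Fin n) → EuclideanSpace ℝ (Fin m) → EuclideanSpace ℝ (Fin n))
    (hfc : ContinuousOn (fun q : EuclideanSpace ℝ (Fin n) × EuclideanSpace ℝ (Fin m) =>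
      f q.1 q.2) (Ω ×ˢ A))
    (I : Set ℝ) (hI : MeasurableSet I) (c w : ℝ → EuclideanSpace ℝ (Fin n))
    (hc : ContinuousOn c I) (hw : ContinuousOn w I) (hcΩ : ∀ t ∈ I, c t ∈ Ω)
    (hwA : ∀ t ∈ I, w t ∈ f (c t) '' A) :
    ∃ a : ℝ → EuclideanSpace ℝ (Fin m), Measurable a ∧ (∀ t, a t ∈ A) ∧
      ∀ t ∈ I, f (c t) (a t) = w t := by
  have key : ∀ B ⊆ A, IsCompact B → IsClosed {q : I × B | f (c q.1) q.2 = w q.1} := by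
    intro B hBA _
    have h1 : Continuous fun q : I × B => f (c q.1) q.2 := by
      have : Continuous fun q : I × B => ((c q.1, (q.2 : EuclideanSpace ℝ (Fin m))) :
          EuclideanSpace ℝ (Fin n) × EuclideanSpace ℝ (Fin m)) :=
        ((continuousOn_iff_continuous_domRestrict.1 hc).comp continuous_fst).prodMk
          (continuous_subtype_val.comp continuous_snd)
      exact hfc.comp_continuous this (fun q => ⟨hcΩ _ q.1.2, hBA q.2.2⟩)
    have h2 : Continuous fun q : I × B => w q.1 :=
      (continuousOn_iff_continuous_domRestrict.1 hw).comp continuous_fst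
    exact isClosed_eq h1 h2
  refine aux_selection A hA hAc I hI (fun t => {b | f (c t) b = w t}) ?_ ?_ ?_
  · intro t ht
    obtain ⟨b, hb, h⟩ := hwA t ht
    exact ⟨b, h, hb⟩
  · intro t ht
    have := (key A subset_rfl hAc).preimage
      (show Continuous fun b : A => ((⟨t, ht⟩ : I), b) by fun_prop)
    have h2 := hAc.isClosed.isClosedEmbedding_subtypeVal.isClosedMap _ this
    have h3 : {b | f (c t) b = w t} ∩ A = Subtype.val '' ((fun b : A => ((⟨t, ht⟩ : I), b)) ⁻¹'
        {q : I × A | f (c q.1) q.2 = w q.1}) := by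
      ext b
      constructor
      · rintro ⟨hb, hbA⟩
        exact ⟨⟨b, hbA⟩, hb, rfl⟩
      · rintro ⟨b', hb', rfl⟩
        exact ⟨hb', b'.2⟩
    rw [h3]
    exact h2
  · intro B hBA hBc
    have : CompactSpace B := isCompact_iff_compactSpace.1 hBc
    have h1 := isClosedMap_fst_of_compactSpace _ (key B hBA hBc)
    have h2 := hI.subtype_image h1.measurableSet
    convert h2 using 1
    ext t
    simp only [mem_ofPred_eq, mem_image, Prod.exists, Subtype.exists]
    constructor
    · rintro ⟨ht, b, hb, hbB⟩
      exact ⟨t, ht, ⟨t, ht, b, hbB, hb, rfl⟩, rfl⟩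
    · rintro ⟨t', ht', ⟨t'', ht'', b, hbB, hb, h⟩, rfl⟩
      cases h
      exact ⟨ht', b, hb, hbB⟩

/-- Reachability of `T` along an integrable admissible trajectory. -/
def AuxReach {n m : ℕ} (Ω T : Set (EuclideanSpace ℝ (Fin n)))
    (A : Set (EuclideanSpace ℝ (Fin m)))
    (f : EuclideanSpace ℝ (Fin n) → EuclideanSpace ℝ (Fin m) → EuclideanSpace ℝ (Fin n))
    (x₀ : EuclideanSpace ℝ (Fin n)) : Prop :=
  ∃ t : ℝ, 0 ≤ t ∧ ∃ (c : ℝ → EuclideanSpace ℝ (Fin n)) (a : ℝ → EuclideanSpace ℝ (Fin m)),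
    c 0 = x₀ ∧ ContinuousOn c (Ici 0) ∧ Measurable a ∧ (∀ s, a s ∈ A) ∧
    (∀ s, 0 ≤ s → IntervalIntegrable (fun u => f (c u) (a u)) volume 0 s ∧
      c s = x₀ + ∫ u in (0:ℝ)..s, f (c u) (a u)) ∧
    (∀ s ∈ Icc (0:ℝ) t, c s ∈ Ω) ∧ c t ∈ T

theorem aux_rest {n m : ℕ} (Ω T : Set (EuclideanSpace ℝ (Fin n)))
    (A : Set (EuclideanSpace ℝ (Fin m)))
    (f : EuclideanSpace ℝ (Fin n) → EuclideanSpace ℝ (Fin m) → EuclideanSpace ℝ (Fin n))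
    (x₀ : EuclideanSpace ℝ (Fin n)) (hxΩ : x₀ ∈ Ω) (hxT : x₀ ∈ T)
    (a₀ : EuclideanSpace ℝ (Fin m)) (ha₀ : a₀ ∈ A) (h0 : f x₀ a₀ = 0) :
    AuxReach Ω T A f x₀ := by
  refine ⟨0, le_rfl, fun _ => x₀, fun _ => a₀, rfl, continuousOn_const, measurable_const,
    fun _ => ha₀, ?_, fun _ _ => hxΩ, hxT⟩
  intro s _
  simp [h0]

theorem aux_glue {n m : ℕ} (Ω T : Set (EuclideanSpace ℝ (Fin n)))
    (A : Set (EuclideanSpace ℝ (Fin m)))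
    (f : EuclideanSpace ℝ (Fin n) → EuclideanSpace ℝ (Fin m) → EuclideanSpace ℝ (Fin n))
    (t₁ : ℝ) (ht₁ : 0 ≤ t₁) (c₁ : ℝ → EuclideanSpace ℝ (Fin n))
    (a₁ : ℝ → EuclideanSpace ℝ (Fin m)) (hc₁ : ContinuousOn c₁ (Icc 0 t₁))
    (hm₁ : Measurable a₁) (hA₁ : ∀ s, a₁ s ∈ A)
    (hi₁ : IntervalIntegrable (fun u => f (c₁ u) (a₁ u)) volume 0 t₁)
    (he₁ : ∀ s ∈ Icc 0 t₁, c₁ s = c₁ 0 + ∫ u in (0:ℝ)..s, f (c₁ u) (a₁ u))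
    (hΩ₁ : ∀ s ∈ Icc 0 t₁, c₁ s ∈ Ω)
    (h : AuxReach Ω T A f (c₁ t₁)) : AuxReach Ω T A f (c₁ 0) := by
  classical
  obtain ⟨t₂, ht₂, c₂, a₂, h20, hc₂, hm₂, hA₂, he₂, hΩ₂, hT₂⟩ := h
  let c : ℝ → EuclideanSpace ℝ (Fin n) := fun s => if s ≤ t₁ then c₁ s else c₂ (s - t₁)
  let a : ℝ → EuclideanSpace ℝ (Fin m) := fun s => if s ≤ t₁ then a₁ s else a₂ (s - t₁)
  have hcl : ∀ s ≤ t₁, c s = c₁ s := fun s hs => by simp [c, hs]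
  have hcr : ∀ s, t₁ ≤ s → c s = c₂ (s - t₁) := by
    intro s hs
    rcases hs.eq_or_lt with rfl | hs
    · simp [c, h20]
    · simp [c, not_le.2 hs]
  have hal : ∀ s ≤ t₁, a s = a₁ s := fun s hs => by simp [a, hs]
  have har : ∀ s, t₁ < s → a s = a₂ (s - t₁) := by
    intro s hs
    simp [a, not_le.2 hs]
  have hIl : ∀ s, 0 ≤ s → s ≤ t₁ → EqOn (fun u => f (c₁ u) (a₁ u)) (fun u => f (c u) (a u))
      (uIoo 0 s) := by
    intro s hs hst u hu
    rw [uIoo_of_le hs] at hu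
    have : u ≤ t₁ := hu.2.le.trans hst
    simp only [hcl u this, hal u this]
  have hIr : ∀ s, t₁ ≤ s → EqOn (fun u => f (c₂ (u - t₁)) (a₂ (u - t₁))) (fun u => f (c u) (a u))
      (uIoo t₁ s) := by
    intro s hs u hu
    rw [uIoo_of_le hs] at hu
    simp only [hcr u hu.1.le, har u hu.1]
  have hi1 : ∀ s ∈ Icc 0 t₁, IntervalIntegrable (fun u => f (c₁ u) (a₁ u)) volume 0 s := by
    intro s hs
    apply hi₁.mono_set
    rw [uIcc_of_le hs.1, uIcc_of_le ht₁]
    exact Icc_subset_Icc_right hs.2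
  have hi2 : ∀ s, t₁ ≤ s →
      IntervalIntegrable (fun u => f (c₂ (u - t₁)) (a₂ (u - t₁))) volume t₁ s := by
    intro s hs
    have := (he₂ (s - t₁) (by linarith)).1.comp_sub_right t₁
    simpa using this
  refine ⟨t₁ + t₂, by positivity, c, a, hcl 0 ht₁, ?_, ?_, ?_, ?_, ?_, ?_⟩
  · have : Ici (0:ℝ) = Icc 0 t₁ ∪ Ici t₁ := (Icc_union_Ici_eq_Ici ht₁).symm
    rw [this]
    apply ContinuousOn.union_of_isClosed
    · exact hc₁.congr (fun s hs => hcl s hs.2)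
    · refine ContinuousOn.congr (f := fun s => c₂ (s - t₁)) ?_ (fun s hs => hcr s hs)
      exact hc₂.comp (by fun_prop) (fun s hs => mem_Ici.2 (sub_nonneg.2 (mem_Ici.1 hs)))
    · exact isClosed_Icc
    · exact isClosed_Ici
  · exact Measurable.ite measurableSet_Iic hm₁ (hm₂.comp (measurable_id.sub_const t₁))
  · intro s
    by_cases hs : s ≤ t₁
    · rw [hal s hs]; exact hA₁ s
    · rw [har s (not_le.1 hs)]; exact hA₂ _
  · intro s hs
    rcases le_total s t₁ with hst | hst
    · refine ⟨(hi1 s ⟨hs, hst⟩).congr_uIoo (hIl s hs hst), ?_⟩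
      rw [hcl s hst, he₁ s ⟨hs, hst⟩, intervalIntegral.integral_congr_uIoo (hIl s hs hst)]
    · have j1 := hi₁.congr_uIoo (hIl t₁ ht₁ le_rfl)
      have j2 := (hi2 s hst).congr_uIoo (hIr s hst)
      refine ⟨j1.trans j2, ?_⟩
      rw [← intervalIntegral.integral_add_adjacent_intervals j1 j2,
        ← intervalIntegral.integral_congr_uIoo (hIl t₁ ht₁ le_rfl),
        ← intervalIntegral.integral_congr_uIoo (hIr s hst),
        intervalIntegral.integral_comp_sub_right (fun u => f (c₂ u) (a₂ u)) t₁, hcr s hst,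
        (he₂ (s - t₁) (by linarith)).2, he₁ t₁ ⟨ht₁, le_rfl⟩, sub_self, add_assoc]
  · intro s hs
    rcases le_total s t₁ with hst | hst
    · rw [hcl s hst]; exact hΩ₁ s ⟨hs.1, hst⟩
    · rw [hcr s hst]; exact hΩ₂ _ ⟨by linarith, by linarith [hs.2]⟩
  · rw [hcr _ (by linarith)]
    simpa using hT₂

theorem aux_leg {n m : ℕ} (Ω T : Set (EuclideanSpace ℝ (Fin n)))
    (A : Set (EuclideanSpace ℝ (Fin m))) (hA : A.Nonempty) (hAc : IsCompact A)
    (f : EuclideanSpace ℝ (Fin n) → EuclideanSpace ℝ (Fin m) → EuclideanSpace ℝ (Fin n))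
    (hfc : ContinuousOn (fun q : EuclideanSpace ℝ (Fin n) × EuclideanSpace ℝ (Fin m) =>
      f q.1 q.2) (Ω ×ˢ A))
    (τ C : ℝ) (hτ : 0 ≤ τ) (c w : ℝ → EuclideanSpace ℝ (Fin n))
    (hc : ContinuousOn c (Icc 0 τ)) (hcΩ : ∀ s ∈ Icc 0 τ, c s ∈ Ω)
    (hw : ContinuousOn w (Ico 0 τ)) (hwC : ∀ s ∈ Ico 0 τ, ‖w s‖ ≤ C)
    (hwA : ∀ s ∈ Ico 0 τ, w s ∈ f (c s) '' A)
    (hd : ∀ s ∈ Ico 0 τ, HasDerivWithinAt c (w s) (Ici s) s)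
    (h : AuxReach Ω T A f (c τ)) : AuxReach Ω T A f (c 0) := by
  obtain ⟨a, ham, haA, ha⟩ := aux_filippov Ω A hA hAc f hfc (Ico 0 τ) measurableSet_Ico c w
    (hc.mono Ico_subset_Icc_self) hw (fun s hs => hcΩ s (Ico_subset_Icc_self hs)) hwA
  have hIntg : IntervalIntegrable (fun u => f (c u) (a u)) volume 0 τ := by
    have h1 : IntervalIntegrable w volume 0 τ := by
      rw [intervalIntegrable_iff_integrableOn_Ioo_of_le hτ]
      refine ⟨(hw.mono Ioo_subset_Ico_self).aestronglyMeasurable measurableSet_Ioo, ?_⟩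
      refine HasFiniteIntegral.restrict_of_bounded (C := C) (by simp) ?_
      exact ae_restrict_of_forall_mem measurableSet_Ioo
        (fun s hs => hwC s (Ioo_subset_Ico_self hs))
    apply h1.congr_uIoo
    intro s hs
    rw [uIoo_of_le hτ] at hs
    exact (ha s (Ioo_subset_Ico_self hs)).symm
  refine aux_glue Ω T A f τ hτ c a hc ham haA hIntg ?_ hcΩ h
  intro s hs
  have hIntg' : IntervalIntegrable (fun u => f (c u) (a u)) volume 0 s := by
    apply hIntg.mono_set
    rw [uIcc_of_le hs.1, uIcc_of_le hτ]
    exact Icc_subset_Icc_right hs.2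
  rw [intervalIntegral.integral_eq_sub_of_hasDeriv_right_of_le hs.1
    (hc.mono (Icc_subset_Icc_right hs.2)) _ hIntg']
  · abel
  · intro u hu
    have hu' : u ∈ Ico 0 τ := ⟨hu.1.le, hu.2.trans_le hs.2⟩
    rw [ha u hu']
    exact (hd u hu').mono Ioi_subset_Ici_self

theorem aux_H_cont {n m : ℕ} (A : Set (EuclideanSpace ℝ (Fin m)))
    (g g' : EuclideanSpace ℝ (Fin m) → EuclideanSpace ℝ (Fin n)) (h h' : ℝ)
    (p p' : EuclideanSpace ℝ (Fin n)) (d B : ℝ)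
    (hg : IsGreatest ((fun a => -⟪g a, p⟫) '' A) h)
    (hg' : IsGreatest ((fun a => -⟪g' a, p'⟫) '' A) h')
    (hd : ∀ a ∈ A, ‖g a - g' a‖ ≤ d) (hB : ∀ a ∈ A, ‖g' a‖ ≤ B) :
    |h - h'| ≤ d * ‖p‖ + B * ‖p - p'‖ := by
  have key : ∀ a ∈ A, |(-⟪g a, p⟫) - (-⟪g' a, p'⟫)| ≤ d * ‖p‖ + B * ‖p - p'‖ := by
    intro a ha
    have e : (-⟪g a, p⟫) - (-⟪g' a, p'⟫) = -(⟪g a - g' a, p⟫ + ⟪g' a, p - p'⟫) := by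
      rw [inner_sub_left, inner_sub_right]; ring
    rw [e, abs_neg]
    refine (abs_add_le _ _).trans ?_
    have h1 := abs_real_inner_le_norm (g a - g' a) p
    have h2 := abs_real_inner_le_norm (g' a) (p - p')
    have h3 := mul_le_mul_of_nonneg_right (hd a ha) (norm_nonneg p)
    have h4 := mul_le_mul_of_nonneg_right (hB a ha) (norm_nonneg (p - p'))
    linarith
  obtain ⟨a, ha, hae⟩ := hg.1
  obtain ⟨a', ha', hae'⟩ := hg'.1
  have u1 := hg.2 ⟨a', ha', rfl⟩
  have u2 := hg'.2 ⟨a, ha, rfl⟩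
  have k1 := abs_le.1 (key a ha)
  have k2 := abs_le.1 (key a' ha')
  simp only at hae hae' u1 u2
  rw [abs_le]
  constructor <;> linarith [k1.1, k1.2, k2.1, k2.2]

theorem aux_H_sub {n m : ℕ} (A : Set (EuclideanSpace ℝ (Fin m)))
    (g : EuclideanSpace ℝ (Fin m) → EuclideanSpace ℝ (Fin n))
    (h : EuclideanSpace ℝ (Fin n) → ℝ)
    (hg : ∀ p, IsGreatest ((fun a => -⟪g a, p⟫) '' A) (h p))
    (p q : EuclideanSpace ℝ (Fin n)) (t : ℝ) (ht : 0 ≤ t) : h (p + t • q) ≤ h p + t * h q := by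
  obtain ⟨a, ha, hae⟩ := (hg (p + t • q)).1
  have u1 := (hg p).2 ⟨a, ha, rfl⟩
  have u2 := (hg q).2 ⟨a, ha, rfl⟩
  simp only [inner_add_right, inner_smul_right] at hae u1 u2
  nlinarith [mul_le_mul_of_nonneg_left u2 ht]

theorem aux_H_line {n : ℕ} (h : EuclideanSpace ℝ (Fin n) → ℝ)
    (p q G : EuclideanSpace ℝ (Fin n)) (hG : HasGradientAt h G p) :
    Filter.Tendsto (fun t : ℝ => t⁻¹ * (h (p + t • q) - h p)) (nhdsWithin 0 (Ioi 0))
      (nhds ⟪G, q⟫) := by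
  have h1 : HasDerivAt (fun t : ℝ => p + t • q) q 0 := by
    simpa using ((hasDerivAt_id (0:ℝ)).smul_const q).const_add p
  have h2 : HasFDerivAt h (InnerProductSpace.toDual ℝ _ G) (p + (0:ℝ) • q) := by
    simpa using hG.hasFDerivAt
  have h3 := (h2.comp_hasDerivAt (0:ℝ) h1).tendsto_slope_zero_right
  simpa using h3

theorem aux_Hp_euler {n m : ℕ} (A : Set (EuclideanSpace ℝ (Fin m)))
    (g : EuclideanSpace ℝ (Fin m) → EuclideanSpace ℝ (Fin n))
    (h : EuclideanSpace ℝ (Fin n) → ℝ)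
    (hg : ∀ p, IsGreatest ((fun a => -⟪g a, p⟫) '' A) (h p))
    (p G : EuclideanSpace ℝ (Fin n)) (hG : HasGradientAt h G p) : ⟪G, p⟫ = h p := by
  have h1 := aux_H_line h p p G hG
  refine tendsto_nhds_unique h1 (tendsto_const_nhds.congr' ?_)
  filter_upwards [self_mem_nhdsWithin] with t ht
  have ht : 0 < t := ht
  have e1 := aux_H_sub A g h hg p p t ht.le
  have e2 : (1 + t) * h p ≤ h (p + t • p) := by
    obtain ⟨a, ha, hae⟩ := (hg p).1
    have u1 := (hg (p + t • p)).2 ⟨a, ha, rfl⟩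
    simp only [inner_add_right, inner_smul_right] at hae u1
    rw [← hae]; linarith
  have e3 : h (p + t • p) = (1 + t) * h p := by linarith
  rw [e3]; field_simp; ring

theorem aux_Hp_mem {n m : ℕ} (A : Set (EuclideanSpace ℝ (Fin m)))
    (g : EuclideanSpace ℝ (Fin m) → EuclideanSpace ℝ (Fin n))
    (h : EuclideanSpace ℝ (Fin n) → ℝ)
    (hg : ∀ p, IsGreatest ((fun a => -⟪g a, p⟫) '' A) (h p))
    (hcl : IsClosed (g '' A)) (hcv : Convex ℝ (g '' A))
    (p G : EuclideanSpace ℝ (Fin n)) (hG : HasGradientAt h G p) : -G ∈ g '' A := by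
  by_contra hn
  obtain ⟨l, u, hl1, hl2⟩ := geometric_hahn_banach_closed_point hcv hcl hn
  let q := -((InnerProductSpace.toDual ℝ (EuclideanSpace ℝ (Fin n))).symm l)
  have hq : ∀ v, l v = -⟪v, q⟫ := by
    intro v
    simp only [q, inner_neg_right, neg_neg]
    rw [real_inner_comm, InnerProductSpace.toDual_symm_apply]
  have e1 : ⟪G, q⟫ ≤ h q := by
    refine le_of_tendsto (aux_H_line h p q G hG) ?_
    filter_upwards [self_mem_nhdsWithin] with t ht
    have ht : 0 < t := ht
    have := aux_H_sub A g h hg p q t ht.le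
    rw [inv_mul_le_iff₀ ht]; linarith
  obtain ⟨a, ha, hae⟩ := (hg q).1
  have e2 := hl1 _ ⟨a, ha, rfl⟩
  rw [hq] at e2 hl2
  simp only [inner_neg_left] at hae hl2
  linarith

theorem aux_grad_sq {n : ℕ} (y s : EuclideanSpace ℝ (Fin n)) (lam : ℝ) :
    gradient (fun u : EuclideanSpace ℝ (Fin n) => ‖u - y‖ ^ 2 / lam) s = (2 / lam) • (s - y) := by
  apply HasGradientAt.gradient
  rw [hasGradientAt_iff_hasFDerivAt]
  have h1 := ((hasFDerivAt_id s).sub_const y).norm_sq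
  have h2 := h1.mul_const lam⁻¹
  simp only [id] at h2
  refine (h2.congr_fderiv ?_)
  ext v
  simp
  ring

theorem aux_bound {n m : ℕ} (Ω : Set (EuclideanSpace ℝ (Fin n)))
    (A : Set (EuclideanSpace ℝ (Fin m))) (hAc : IsCompact A)
    (f : EuclideanSpace ℝ (Fin n) → EuclideanSpace ℝ (Fin m) → EuclideanSpace ℝ (Fin n))
    (hfc : ContinuousOn (fun q : EuclideanSpace ℝ (Fin n) × EuclideanSpace ℝ (Fin m) =>
      f q.1 q.2) (Ω ×ˢ A)) (x₀ : EuclideanSpace ℝ (Fin n)) (hx₀ : x₀ ∈ Ω) :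
    ContinuousOn (f x₀) A ∧ ∃ B : ℝ, 0 < B ∧ ∀ a ∈ A, ‖f x₀ a‖ ≤ B := by
  have h1 : ContinuousOn (f x₀) A :=
    hfc.comp (f := fun a => (x₀, a)) (by fun_prop) (fun a ha => ⟨hx₀, ha⟩)
  obtain ⟨B, hB⟩ := hAc.exists_bound_of_continuousOn h1
  exact ⟨h1, max B 1, by positivity, fun a ha => (hB a ha).trans (le_max_left _ _)⟩

theorem aux_reach_pos {n m : ℕ} (Ω : Set (EuclideanSpace ℝ (Fin n))) (hΩo : IsOpen Ω)
    (T : Set (EuclideanSpace ℝ (Fin n))) (hT : IsClosed T)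
    (A : Set (EuclideanSpace ℝ (Fin m))) (hA : A.Nonempty) (hAc : IsCompact A)
    (f : EuclideanSpace ℝ (Fin n) → EuclideanSpace ℝ (Fin m) → EuclideanSpace ℝ (Fin n))
    (hfc : ContinuousOn (fun q : EuclideanSpace ℝ (Fin n) × EuclideanSpace ℝ (Fin m) =>
      f q.1 q.2) (Ω ×ˢ A))
    (L : ℝ) (hLip : ∀ a ∈ A, ∀ x ∈ Ω, ∀ y ∈ Ω, ‖f x a - f y a‖ ≤ L * ‖x - y‖)
    (F gU : EuclideanSpace ℝ (Fin n) → EuclideanSpace ℝ (Fin n))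
    (V : EuclideanSpace ℝ (Fin n) → ℝ)
    (hVc : ContinuousOn V (Ω \ T))
    (hFc : ContinuousOn F {x | x ∈ Ω \ T ∧ 0 < V x})
    (hFA : ∀ x ∈ Ω \ T, 0 < V x → F x ∈ f x '' A)
    (hvis : ∀ s ∈ Ω \ T, 0 < V s → ∀ y, ∀ lam > (0 : ℝ),
      IsLocalMax (fun u => V u - ‖u - y‖ ^ 2 / lam) s → 0 ≤ ⟪F s, s - y⟫)
    (U : EuclideanSpace ℝ (Fin n) → ℝ) (M : ℝ)
    (hgU : ∀ x ∈ Ω \ T, HasGradientAt U (gU x) x)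
    (hE : ∀ x ∈ Ω \ T, 0 < V x → ⟪gU x, F x⟫ = -V x)
    (hUc : ContinuousOn U (closure (Ω \ T)))
    (hUfr : ∀ x ∈ frontier Ω, U x = M)
    (hUΩ : ∀ x ∈ Ω \ T, 0 < U x ∧ U x < M)
    (hrest : ∀ x ∈ T, AuxReach Ω T A f x)
    (x₀ : EuclideanSpace ℝ (Fin n)) (hx₀ : x₀ ∈ Ω \ T) (hV₀ : 0 < V x₀) :
    AuxReach Ω T A f x₀ := by
  have hDo : IsOpen (Ω \ T) := hΩo.sdiff hT
  obtain ⟨-, B, hB0, hB⟩ := aux_bound Ω A hAc f hfc x₀ hx₀.1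
  have hlin : ∀ x ∈ Ω \ T, 0 < V x → ‖F x‖ ≤ |L| * ‖x - x₀‖ + B := by
    intro x hx hVx
    obtain ⟨a, ha, hae⟩ := hFA x hx hVx
    rw [← hae]
    have h1 := hLip a ha x hx.1 x₀ hx₀.1
    have h2 := hB a ha
    have h3 : f x a = (f x a - f x₀ a) + f x₀ a := by abel
    rw [h3]
    refine (norm_add_le _ _).trans ?_
    have h4 : L * ‖x - x₀‖ ≤ |L| * ‖x - x₀‖ :=
      mul_le_mul_of_nonneg_right (le_abs_self L) (norm_nonneg _)
    linarith
  set Ts := U x₀ / V x₀ with hTs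
  have hTs0 : 0 < Ts := div_pos (hUΩ x₀ hx₀).1 hV₀
  set R := gronwallBound 0 |L| B Ts + 1 with hR
  have hmono := gronwallBound_mono (le_refl (0:ℝ)) hB0.le (abs_nonneg L)
  have hRpos : 0 < R := by
    have := hmono hTs0.le
    rw [gronwallBound_x0] at this
    linarith
  let P : Set (EuclideanSpace ℝ (Fin n)) := {x | x ∈ Ω \ T ∧ 0 < V x} ∩ Metric.ball x₀ R
  have hPD : ∀ x ∈ P, x ∈ Ω \ T := fun x hx => hx.1.1
  have hPV : ∀ x ∈ P, 0 < V x := fun x hx => hx.1.2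
  have hPo : IsOpen P := (hVc.isOpen_inter_preimage hDo isOpen_Ioi).inter Metric.isOpen_ball
  have hx₀P : x₀ ∈ P := ⟨⟨hx₀, hV₀⟩, Metric.mem_ball_self hRpos⟩
  have hCpos : 0 < |L| * R + B := by positivity
  have hFC : ∀ x ∈ P, ‖F x‖ ≤ |L| * R + B := by
    intro x hx
    refine (hlin x hx.1.1 hx.1.2).trans ?_
    have : ‖x - x₀‖ ≤ R := by
      have := hx.2
      rw [Metric.mem_ball, dist_eq_norm] at this
      exact this.le
    gcongr
  obtain ⟨x, hx0, hxc, hxd, hxV⟩ := aux_viability P hPo x₀ F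
    (hFc.mono inter_subset_left) (|L| * R + B) hCpos hFC V (hVc.mono hPD)
    (fun s hs y lam hlam hloc => hvis s (hPD s hs) (hPV s hs) y lam hlam hloc)
  -- decrease of U
  have hdec : ∀ t, 0 ≤ t → (∀ s ∈ Icc 0 t, x s ∈ P) → U (x t) ≤ U x₀ - V x₀ * t := by
    intro t ht hP
    have hder : ∀ s ∈ Ico 0 t, HasDerivWithinAt (fun s => U (x s)) (-V (x s)) (Ici s) s := by
      intro s hs
      have hsP := hP s ⟨hs.1, hs.2.le⟩
      have h1 := (hgU _ (hPD _ hsP)).hasFDerivAt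
      have h2 := h1.comp_hasDerivWithinAt s (hxd s hs.1 hsP)
      rw [InnerProductSpace.toDual_apply_apply, hE _ (hPD _ hsP) (hPV _ hsP)] at h2
      exact h2
    have hcont : ContinuousOn (fun s => U (x s)) (Icc 0 t) :=
      (hUc.mono subset_closure).comp hxc.continuousOn (fun s hs => hPD _ (hP s hs))
    have hBd : ∀ s ∈ Ico 0 t, HasDerivWithinAt (fun s => U x₀ - V x₀ * s) (-V x₀) (Ici s) s := by
      intro s _
      have := ((hasDerivAt_id s).const_mul (V x₀)).const_sub (U x₀)
      simpa using this.hasDerivWithinAt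
    refine image_le_of_deriv_right_le_deriv_boundary hcont hder (B := fun s => U x₀ - V x₀ * s)
      (by simp [hx0]) (by fun_prop) hBd ?_ ⟨ht, le_rfl⟩
    intro s hs
    have := hxV s hs.1 (fun u hu => hP u ⟨hu.1, hu.2.trans hs.2.le⟩)
    linarith
  -- exit time
  let S : Set ℝ := Icc 0 Ts ∩ x ⁻¹' Pᶜ
  have hSc : IsCompact S := isCompact_Icc.inter_right (hPo.isClosed_compl.preimage hxc)
  have hSne : S.Nonempty := by
    by_contra hne
    have hall : ∀ s ∈ Icc 0 Ts, x s ∈ P := by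
      intro s hs
      by_contra h
      exact hne ⟨s, hs, h⟩
    have h1 := hdec Ts hTs0.le hall
    have h2 := (hUΩ _ (hPD _ (hall Ts ⟨hTs0.le, le_rfl⟩))).1
    have h3 : V x₀ * Ts = U x₀ := by rw [hTs]; field_simp
    linarith
  set τ := sInf S with hτ
  have hτS : τ ∈ S := hSc.sInf_mem hSne
  have hτ0 : 0 < τ := by
    rcases hτS.1.1.eq_or_lt with h | h
    · exfalso
      apply hτS.2
      rw [← h, hx0]; exact hx₀P
    · exact h
  have hbef : ∀ s ∈ Ico 0 τ, x s ∈ P := by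
    intro s hs
    by_contra h
    have : τ ≤ s := csInf_le hSc.bddBelow ⟨⟨hs.1, hs.2.le.trans hτS.1.2⟩, h⟩
    linarith [hs.2]
  have hbef' : ∀ t ∈ Ico 0 τ, ∀ s ∈ Icc 0 t, x s ∈ P :=
    fun t ht s hs => hbef s ⟨hs.1, hs.2.trans_lt ht.2⟩
  have hevI : ∀ᶠ s in nhdsWithin τ (Iio τ), s ∈ Ico 0 τ := by
    filter_upwards [self_mem_nhdsWithin,
      mem_nhdsWithin_of_mem_nhds (Ioi_mem_nhds hτ0)] with s h1 h2
    exact ⟨le_of_lt h2, h1⟩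
  have hxt : Filter.Tendsto x (nhdsWithin τ (Iio τ)) (nhds (x τ)) :=
    (hxc.tendsto τ).mono_left nhdsWithin_le_nhds
  have hclD : x τ ∈ closure (Ω \ T) := by
    refine mem_closure_of_tendsto hxt ?_
    filter_upwards [hevI] with s hs using hPD _ (hbef s hs)
  have hUτ : U (x τ) ≤ U x₀ := by
    have h1 : Filter.Tendsto x (nhdsWithin τ (Iio τ)) (nhdsWithin (x τ) (closure (Ω \ T))) := by
      refine tendsto_nhdsWithin_iff.2 ⟨hxt, ?_⟩
      filter_upwards [hevI] with s hs using subset_closure (hPD _ (hbef s hs))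
    have h2 := (hUc _ hclD).tendsto.comp h1
    refine le_of_tendsto h2 ?_
    filter_upwards [hevI] with s hs
    have h3 := hdec s hs.1 (hbef' s hs)
    have h4 : 0 ≤ V x₀ * s := mul_nonneg hV₀.le hs.1
    simp only [Function.comp]
    linarith
  have hτΩ : x τ ∈ Ω := by
    by_contra hn
    have hfr : x τ ∈ frontier Ω := by
      rw [hΩo.frontier_eq]
      exact ⟨closure_mono sdiff_subset hclD, hn⟩
    have h1 := hUfr _ hfr
    have h2 := (hUΩ x₀ hx₀).2
    linarith
  have hxd' : ∀ s ∈ Ico 0 τ, HasDerivWithinAt x (F (x s)) (Ici s) s :=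
    fun s hs => hxd s hs.1 (hbef s hs)
  have hτT : x τ ∈ T := by
    by_contra hn
    have hD : x τ ∈ Ω \ T := ⟨hτΩ, hn⟩
    have hVτ : V x₀ ≤ V (x τ) := by
      have h2 := (hVc.continuousAt (hDo.mem_nhds hD)).tendsto.comp hxt
      refine ge_of_tendsto h2 ?_
      filter_upwards [hevI] with s hs using hxV s hs.1 (hbef' s hs)
    have hgr := norm_le_gronwallBound_of_norm_deriv_right_le
      (f := fun s => x s - x₀) (f' := fun s => F (x s)) (δ := 0) (K := |L|) (ε := B)
      (a := 0) (b := τ) (by fun_prop) (fun s hs => (hxd' s hs).sub_const x₀) (by simp [hx0])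
      (fun s hs => hlin _ (hPD _ (hbef s hs)) (hPV _ (hbef s hs))) τ ⟨hτ0.le, le_rfl⟩
    rw [sub_zero] at hgr
    have h3 := hmono hτS.1.2
    apply hτS.2
    refine ⟨⟨hD, hV₀.trans_le hVτ⟩, ?_⟩
    rw [Metric.mem_ball, dist_eq_norm]
    linarith
  have := aux_leg Ω T A hA hAc f hfc τ (|L| * R + B) hτ0.le x (fun s => F (x s))
    hxc.continuousOn (by
      intro s hs
      rcases hs.2.eq_or_lt with h | h
      · rw [h]; exact hτΩ
      · exact (hPD _ (hbef s ⟨hs.1, h⟩)).1)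
    ((hFc.mono inter_subset_left).comp hxc.continuousOn hbef)
    (fun s hs => hFC _ (hbef s hs))
    (fun s hs => hFA _ (hPD _ (hbef s hs)) (hPV _ (hbef s hs))) hxd' (hrest _ hτT)
  rwa [hx0] at this

/-- Leaving the singular set along a transversal velocity. -/
theorem aux_leave {n m : ℕ} (Ω : Set (EuclideanSpace ℝ (Fin n))) (hΩo : IsOpen Ω)
    (T : Set (EuclideanSpace ℝ (Fin n))) (hT : IsClosed T)
    (A : Set (EuclideanSpace ℝ (Fin m))) (hA : A.Nonempty) (hAc : IsCompact A)
    (f : EuclideanSpace ℝ (Fin n) → EuclideanSpace ℝ (Fin m) → EuclideanSpace ℝ (Fin n))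
    (hfc : ContinuousOn (fun q : EuclideanSpace ℝ (Fin n) × EuclideanSpace ℝ (Fin m) =>
      f q.1 q.2) (Ω ×ˢ A))
    (L : ℝ) (hLip : ∀ a ∈ A, ∀ x ∈ Ω, ∀ y ∈ Ω, ‖f x a - f y a‖ ≤ L * ‖x - y‖)
    (x₀ : EuclideanSpace ℝ (Fin n)) (hx₀ : x₀ ∈ Ω \ T)
    (Lc : EuclideanSpace ℝ (Fin n) →L[ℝ] EuclideanSpace ℝ (Fin n))
    (p : Submodule ℝ (EuclideanSpace ℝ (Fin n))) (u : Set (EuclideanSpace ℝ (Fin n)))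
    (φ : EuclideanSpace ℝ (Fin n) → EuclideanSpace ℝ (Fin n)) (hu : u ∈ nhds x₀)
    (hφ : HasFDerivAt φ Lc x₀) (hφ0 : φ x₀ = 0)
    (a : EuclideanSpace ℝ (Fin m)) (ha : a ∈ A) (hLa : Lc (f x₀ a) ∉ p) :
    ∃ z ∈ Ω \ T, z ∈ u ∧ φ z ∉ p ∧ (AuxReach Ω T A f z → AuxReach Ω T A f x₀) := by
  have hDo : IsOpen (Ω \ T) := hΩo.sdiff hT
  have hPo : IsOpen ((Ω \ T) ∩ Metric.ball x₀ 1) := hDo.inter Metric.isOpen_ball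
  have hxP : x₀ ∈ (Ω \ T) ∩ Metric.ball x₀ 1 := ⟨hx₀, Metric.mem_ball_self one_pos⟩
  obtain ⟨-, B, hB0, hB⟩ := aux_bound Ω A hAc f hfc x₀ hx₀.1
  have hfa : ContinuousOn (fun x => f x a) Ω := by
    have : ContinuousOn (fun x : EuclideanSpace ℝ (Fin n) => (x, a)) Ω := by fun_prop
    exact hfc.comp this (fun x hx => ⟨hx, ha⟩)
  have hbd : ∀ x ∈ (Ω \ T) ∩ Metric.ball x₀ 1, ‖f x a‖ ≤ B + |L| := by
    intro x hx
    have h1 := hLip a ha x hx.1.1 x₀ hx₀.1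
    have h2 : ‖x - x₀‖ < 1 := by simpa [dist_eq_norm] using hx.2
    have h3 : L * ‖x - x₀‖ ≤ |L| := by
      calc L * ‖x - x₀‖ ≤ |L| * ‖x - x₀‖ := by gcongr; exact le_abs_self L
        _ ≤ |L| * 1 := by gcongr
        _ = |L| := mul_one _
    have h4 : ‖f x a‖ ≤ ‖f x a - f x₀ a‖ + ‖f x₀ a‖ := by
      simpa using norm_add_le (f x a - f x₀ a) (f x₀ a)
    linarith [hB a ha]
  obtain ⟨c, hc0, hcc, hcd, -⟩ := aux_viability ((Ω \ T) ∩ Metric.ball x₀ 1) hPo x₀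
    (fun x => f x a) (hfa.mono (fun x hx => hx.1.1)) (B + |L|) (by positivity) hbd
    (fun _ => 0) continuousOn_const (by
      intro s hs y lam hlam hmax
      have hg := hmax.fderiv_eq_zero
      have h1 : IsLocalMin (fun u => ‖u - y‖ ^ 2 / lam) s := by
        have := hmax.neg
        simpa using this
      have h2 : gradient (fun u => ‖u - y‖ ^ 2 / lam) s = 0 := by
        rw [gradient, h1.fderiv_eq_zero, map_zero]
      rw [aux_grad_sq] at h2
      have h3 : s - y = 0 := by
        rcases smul_eq_zero.1 h2 with h | h
        · have : (0:ℝ) < 2 / lam := by positivity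
          exact absurd h this.ne'
        · exact h
      rw [h3, inner_zero_right])
  have hder : HasDerivWithinAt c (f x₀ a) (Ici 0) 0 := by
    have := hcd 0 le_rfl (hc0 ▸ hxP)
    rwa [hc0] at this
  have hφc : HasDerivWithinAt (φ ∘ c) (Lc (f x₀ a)) (Ici 0) 0 := by
    have h := hφ
    rw [← hc0] at h
    exact h.comp_hasDerivWithinAt (0:ℝ) hder
  have hslope := hasDerivWithinAt_iff_tendsto_slope.1 hφc.Ioi_of_Ici
  have hclosed : IsOpen ((p : Set (EuclideanSpace ℝ (Fin n)))ᶜ) :=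
    (Submodule.closed_of_finiteDimensional p).isOpen_compl
  have hev1 : ∀ᶠ t in nhdsWithin (0:ℝ) (Ioi 0), φ (c t) ∉ p := by
    rw [Set.sdiff_singleton_eq_self (by simp)] at hslope
    filter_upwards [hslope.eventually (hclosed.mem_nhds hLa)] with t ht hmem
    apply ht
    simp only [slope, Function.comp_apply, hc0, hφ0, vsub_eq_sub, sub_zero]
    exact p.smul_mem _ hmem
  have hctend : Filter.Tendsto c (nhds 0) (nhds x₀) := by
    have := hcc.tendsto 0
    rwa [hc0] at this
  have hev2 : ∀ᶠ t in nhdsWithin (0:ℝ) (Ioi 0), c t ∈ u :=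
    (hctend.eventually hu).filter_mono nhdsWithin_le_nhds
  have hev3 : ∀ᶠ t in nhdsWithin (0:ℝ) (Ioi 0),
      ∀ s ∈ Icc 0 t, c s ∈ (Ω \ T) ∩ Metric.ball x₀ 1 := by
    have h := hctend.eventually (hPo.mem_nhds hxP)
    obtain ⟨ε, hε, hb⟩ := Metric.eventually_nhds_iff.1 h
    filter_upwards [Ioo_mem_nhdsGT hε] with t ht s hs
    apply hb
    rw [Real.dist_eq, sub_zero, abs_of_nonneg hs.1]
    exact hs.2.trans_lt ht.2
  obtain ⟨t, ⟨⟨h1, h2⟩, h3⟩, ht⟩ :=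
    (((hev1.and hev2).and hev3).and self_mem_nhdsWithin).exists
  have ht0 : (0:ℝ) ≤ t := le_of_lt ht
  refine ⟨c t, (h3 t ⟨ht0, le_rfl⟩).1, h2, h1, fun hr => ?_⟩
  rw [← hc0]
  refine aux_leg Ω T A hA hAc f hfc t (B + |L|) ht0 c (fun s => f (c s) a) hcc.continuousOn
    (fun s hs => (h3 s hs).1.1) ?_ ?_ ?_ ?_ hr
  · exact hfa.comp hcc.continuousOn (fun s hs => (h3 s ⟨hs.1, hs.2.le⟩).1.1)
  · exact fun s hs => hbd _ (h3 s ⟨hs.1, hs.2.le⟩)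
  · exact fun s hs => ⟨a, ha, rfl⟩
  · exact fun s hs => hcd s hs.1 (h3 s ⟨hs.1, hs.2.le⟩)

/-- if moreover the singular set `ℋ ∩ (Ω \ T)` is an embedded `C¹`
submanifold of dimension at most `n-1` (encoded through a local `C¹` chart `φ`
flattening it onto a proper subspace `p`, whose differential at `x₀` is the linear
equivalence `L`, so that the tangent space is `L⁻¹(p)`), and at each of its points
some admissible velocity `f(x₀,a)` is not tangent to it, then the target can be
reached in finite time from every point of `Ω \ T`. -/
theorem stmt_9 {n m : ℕ} (Ω : Set (EuclideanSpace ℝ (Fin n))) (hΩo : IsOpen Ω)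
    (T : Set (EuclideanSpace ℝ (Fin n))) (hT : IsClosed T) (hTΩ : T ⊆ Ω)
    (A : Set (EuclideanSpace ℝ (Fin m))) (hA : A.Nonempty) (hAc : IsCompact A)
    (f : EuclideanSpace ℝ (Fin n) → EuclideanSpace ℝ (Fin m) → EuclideanSpace ℝ (Fin n))
    (hfc : ContinuousOn (fun q : EuclideanSpace ℝ (Fin n) × EuclideanSpace ℝ (Fin m) =>
      f q.1 q.2) (Ω ×ˢ A))
    (L : ℝ) (hLip : ∀ a ∈ A, ∀ x ∈ Ω, ∀ y ∈ Ω, ‖f x a - f y a‖ ≤ L * ‖x - y‖)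
    (hconv : ∀ x ∈ Ω, Convex ℝ (f x '' A))
    (hsymm : ∀ x ∈ Ω, ∀ a ∈ A, ∃ a' ∈ A, f x a' = -f x a)
    (H : EuclideanSpace ℝ (Fin n) → EuclideanSpace ℝ (Fin n) → ℝ)
    (hH : ∀ x p, IsGreatest ((fun a => -⟪f x a, p⟫) '' A) (H x p))
    (Hp : EuclideanSpace ℝ (Fin n) → EuclideanSpace ℝ (Fin n) → EuclideanSpace ℝ (Fin n))
    (hHp : ∀ x p, 0 < H x p → HasGradientAt (H x) (Hp x p) p)
    (hHpc : ContinuousOn (fun q : EuclideanSpace ℝ (Fin n) × EuclideanSpace ℝ (Fin n) =>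
      Hp q.1 q.2) {q | 0 < H q.1 q.2})
    (U : EuclideanSpace ℝ (Fin n) → ℝ) (M : ℝ) (hM : 0 < M)
    (hUc : ContinuousOn U (closure (Ω \ T)))
    (hU1 : ContDiffOn ℝ 1 U (Ω \ (T ∩ {x | H x (gradient U x) = 0})))
    (hUnn : ∀ x ∈ closure (Ω \ T), 0 ≤ U x)
    (hUT : ∀ x ∈ T, U x = 0) (hUfr : ∀ x ∈ frontier Ω, U x = M)
    (hUΩ : ∀ x ∈ Ω \ T, 0 < U x ∧ U x < M)
    -- `U` is a `C¹`-supersolution of the Aronsson equation on `Ω \ (T ∩ ℋ)`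
    (hsub : ∀ φ : EuclideanSpace ℝ (Fin n) → ℝ, ContDiff ℝ 1 φ →
      ∀ x₀ ∈ Ω \ (T ∩ {x | H x (gradient U x) = 0}), 0 < H x₀ (gradient U x₀) →
      IsLocalMaxOn (fun x => H x (gradient U x) - φ x)
        (Ω \ (T ∩ {x | H x (gradient U x) = 0})) x₀ →
      -⟪-(Hp x₀ (gradient U x₀)), gradient φ x₀⟫ ≤ 0)
    (hsup : ∀ φ : EuclideanSpace ℝ (Fin n) → ℝ, ContDiff ℝ 1 φ →
      ∀ x₀ ∈ Ω \ (T ∩ {x | H x (gradient U x) = 0}), 0 < H x₀ (gradient U x₀) →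
      IsLocalMinOn (fun x => H x (gradient U x) - φ x)
        (Ω \ (T ∩ {x | H x (gradient U x) = 0})) x₀ →
      0 ≤ ⟪-(Hp x₀ (gradient U x₀)), gradient φ x₀⟫)
    -- decay condition
    (hdecay : ∀ ε > (0:ℝ), ∃ δ > (0:ℝ), ∃ c > (0:ℝ), ∀ x ∈ Ω,
      ε ≤ H x (gradient U x) → Metric.infDist x T < δ →
      U x ≤ c * Metric.infDist x T)
    -- `ℋ ∩ (Ω \ T)` is an embedded `C¹` submanifold of dimension `≤ n-1`,
    -- and some admissible velocity is transversal to it at each of its points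
    (hman : ∀ x₀ ∈ {x | H x (gradient U x) = 0} ∩ (Ω \ T),
      ∃ (Lc : EuclideanSpace ℝ (Fin n) ≃L[ℝ] EuclideanSpace ℝ (Fin n))
        (p : Submodule ℝ (EuclideanSpace ℝ (Fin n)))
        (u : Set (EuclideanSpace ℝ (Fin n))) (φ : EuclideanSpace ℝ (Fin n) →
          EuclideanSpace ℝ (Fin n)),
        p ≠ ⊤ ∧ u ∈ nhds x₀ ∧ ContDiffOn ℝ 1 φ u ∧
        HasFDerivAt φ (Lc : EuclideanSpace ℝ (Fin n) →L[ℝ] EuclideanSpace ℝ (Fin n)) x₀ ∧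
        φ x₀ = 0 ∧
        (∀ x ∈ u, (x ∈ {y | H y (gradient U y) = 0} ∩ (Ω \ T) ↔ φ x ∈ p)) ∧
        -- `f(x₀,a) ∉ T_{x₀}ℋ = Lc⁻¹(p)` for some `a ∈ A`
        ∃ a ∈ A, Lc (f x₀ a) ∉ p) :
    -- the target is reached in finite time from every point of `Ω \ T`
    ∀ x₀ ∈ Ω \ T, (reachTimes Ω T A f x₀).Nonempty := by
  classical
  have hDo : IsOpen (Ω \ T) := hΩo.sdiff hT
  have hDsub : Ω \ T ⊆ Ω \ (T ∩ {x | H x (gradient U x) = 0}) :=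
    fun x hx => ⟨hx.1, fun h => hx.2 h.1⟩
  have hU1D : ContDiffOn ℝ 1 U (Ω \ T) := hU1.mono hDsub
  have hgU : ∀ x ∈ Ω \ T, HasGradientAt U (gradient U x) x := fun x hx =>
    ((hU1D.differentiableOn (by norm_num)).differentiableAt (hDo.mem_nhds hx)).hasGradientAt
  have hgc : ContinuousOn (gradient U) (Ω \ T) := by
    have h1 := hU1D.continuousOn_fderiv_of_isOpen hDo (by norm_num)
    exact (InnerProductSpace.toDual ℝ (EuclideanSpace ℝ (Fin n))).symm.continuous.comp_continuousOn h1
  have hzero : ∀ x ∈ Ω, ∃ a₀ ∈ A, f x a₀ = 0 := by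
    intro x hx
    obtain ⟨a, ha⟩ := hA
    obtain ⟨a', ha', he⟩ := hsymm x hx a ha
    have := hconv x hx (mem_image_of_mem _ ha) (mem_image_of_mem _ ha')
      (show (0:ℝ) ≤ 1 / 2 by norm_num) (show (0:ℝ) ≤ 1 / 2 by norm_num) (by norm_num)
    rw [he, smul_neg, add_neg_cancel] at this
    exact this
  have hVnn : ∀ x ∈ Ω, 0 ≤ H x (gradient U x) := by
    intro x hx
    obtain ⟨a₀, ha₀, h0⟩ := hzero x hx
    have := (hH x (gradient U x)).2 (mem_image_of_mem _ ha₀)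
    simpa [h0] using this
  have hVc : ContinuousOn (fun x => H x (gradient U x)) (Ω \ T) := by
    intro x hx
    obtain ⟨-, B, hB0, hB⟩ := aux_bound Ω A hAc f hfc x hx.1
    have hg := hgc x hx
    have hid : Filter.Tendsto (fun y => y) (nhdsWithin x (Ω \ T)) (nhds x) :=
      Filter.tendsto_id.mono_left nhdsWithin_le_nhds
    have hlim : Filter.Tendsto (fun y => L * ‖y - x‖ * ‖gradient U y‖
        + B * ‖gradient U y - gradient U x‖) (nhdsWithin x (Ω \ T)) (nhds 0) := by
      have h1 : Filter.Tendsto (fun y => L * ‖y - x‖ * ‖gradient U y‖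
        + B * ‖gradient U y - gradient U x‖) (nhdsWithin x (Ω \ T))
          (nhds (L * ‖x - x‖ * ‖gradient U x‖ + B * ‖gradient U x - gradient U x‖)) :=
        (((hid.sub_const x).norm.const_mul L).mul hg.norm).add
          (((Filter.Tendsto.sub_const hg _).norm).const_mul B)
      simpa using h1
    rw [ContinuousWithinAt, tendsto_iff_dist_tendsto_zero]
    refine squeeze_zero' (Filter.Eventually.of_forall fun y => dist_nonneg) ?_ hlim
    filter_upwards [self_mem_nhdsWithin] with y hy
    rw [Real.dist_eq]
    exact aux_H_cont A (f y) (f x) _ _ _ _ _ _ (hH y _) (hH x _)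
      (fun a ha => hLip a ha y hy.1 x hx.1) hB
  have hFc : ContinuousOn (fun x => -(Hp x (gradient U x)))
      {x | x ∈ Ω \ T ∧ 0 < H x (gradient U x)} := by
    have h1 : ContinuousOn (fun x => (x, gradient U x))
        {x | x ∈ Ω \ T ∧ 0 < H x (gradient U x)} :=
      continuousOn_id.prodMk (hgc.mono fun x hx => hx.1)
    exact (hHpc.comp h1 (fun x hx => hx.2)).neg
  have hFA : ∀ x ∈ Ω \ T, 0 < H x (gradient U x) →
      -(Hp x (gradient U x)) ∈ f x '' A := by
    intro x hx hV
    have hcl : IsClosed (f x '' A) :=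
      (hAc.image_of_continuousOn (aux_bound Ω A hAc f hfc x hx.1).1).isClosed
    exact aux_Hp_mem A (f x) (H x) (hH x) hcl (hconv x hx.1) _ _ (hHp x _ hV)
  have hE : ∀ x ∈ Ω \ T, 0 < H x (gradient U x) →
      ⟪gradient U x, -(Hp x (gradient U x))⟫ = -H x (gradient U x) := by
    intro x hx hV
    rw [inner_neg_right, real_inner_comm,
      aux_Hp_euler A (f x) (H x) (hH x) _ _ (hHp x _ hV)]
  have hvis : ∀ s ∈ Ω \ T, 0 < H s (gradient U s) → ∀ y, ∀ lam > (0 : ℝ),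
      IsLocalMax (fun u => H u (gradient U u) - ‖u - y‖ ^ 2 / lam) s →
      0 ≤ ⟪-(Hp s (gradient U s)), s - y⟫ := by
    intro s hs hV y lam hlam hmax
    have hφ : ContDiff ℝ 1 (fun u : EuclideanSpace ℝ (Fin n) => ‖u - y‖ ^ 2 / lam) :=
      ((contDiff_id.sub contDiff_const).norm_sq ℝ).div_const lam
    have h := hsub _ hφ s (hDsub hs) hV (hmax.on _)
    rw [aux_grad_sq, inner_smul_right] at h
    have h2 : (0:ℝ) < 2 / lam := by positivity
    by_contra hneg
    push Not at hneg
    nlinarith [mul_neg_of_pos_of_neg h2 hneg]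
  have hrest : ∀ x ∈ T, AuxReach Ω T A f x := by
    intro x hx
    obtain ⟨a₀, ha₀, h0⟩ := hzero x (hTΩ hx)
    exact aux_rest Ω T A f x (hTΩ hx) hx a₀ ha₀ h0
  have hpos : ∀ x ∈ Ω \ T, 0 < H x (gradient U x) → AuxReach Ω T A f x := fun x hx hV =>
    aux_reach_pos Ω hΩo T hT A hA hAc f hfc L hLip (fun x => -(Hp x (gradient U x)))
      (gradient U) (fun x => H x (gradient U x)) hVc hFc hFA hvis U M hgU hE hUc hUfr hUΩ
      hrest x hx hV
  have hall : ∀ x ∈ Ω \ T, AuxReach Ω T A f x := by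
    intro x hx
    rcases (hVnn x hx.1).lt_or_eq with hV | hV
    · exact hpos x hx hV
    · obtain ⟨Lc, p, u, φ, -, hu, -, hφ, hφ0, hiff, a, ha, hLa⟩ := hman x ⟨hV.symm, hx⟩
      obtain ⟨z, hz, hzu, hzp, himp⟩ := aux_leave Ω hΩo T hT A hA hAc f hfc L hLip x hx
        (Lc : EuclideanSpace ℝ (Fin n) →L[ℝ] EuclideanSpace ℝ (Fin n)) p u φ hu hφ hφ0 a ha hLa
      apply himp
      refine hpos z hz (lt_of_le_of_ne (hVnn z hz.1) fun h0 => hzp ?_)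
      exact (hiff z hzu).1 ⟨h0.symm, hz⟩
  intro x₀ hx₀
  obtain ⟨t, ht, c, a, hc0, hcc, ham, haA, hIntg, hΩc, hcT⟩ := hall x₀ hx₀
  exact ⟨t, ht, c, ⟨hc0, hcc, a, ham, haA, fun s hs => (hIntg s hs).2⟩, hΩc, hcT⟩
end
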